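/- Let E be a second-countable topological graph and β ∈ ℝ. The pushforward r_* along the range map r : ∂E → E⁰ is an affine bijection between the set of β-quasi-invariant regular Borel measures on ∂E and the set of β-sub-invariant regular Borel measures on E⁰; moreover ν is a probability measure if and only if r_*ν is a probability measure. -/

import Mathlib

/-!
A boundary path is encoded by its range and its sequence of edges, padded by `∞` (`Phi`). The
topology of `∂E` is the one induced by the truncations `∂E → ∏ₙ (Eⁿ ∪ {∞})` (`inducing_Psi`), and
the range map is proper (`isCompact_brng_preimage`): a limit of finite truncations cannot escape to
`∞` over a regular vertex. Hence `∂E` is a locally compact, second countable Hausdorff space, on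
which the regular Borel measures are the locally finite ones, and they are carried to regular
measures by the range map.

*The range is sub-invariant* (`subInv_map`). For a quasi-invariant `ν`, the pullback of `r_*ν` to
`E¹` is `e^β` times the law of the first edge under `ν`. Its image under `r` is `e^β` times the
restriction of `ν` to paths of positive length, seen on `E⁰`, and all paths whose range is regular
have positive length.

*Injectivity* (`injOn_map_brng`). Removing the first edge multiplies a quasi-invariant measure by
`e^β`. After finitely many such steps, the measure of a Borel cylinder is expressed in terms of the
range measure. The cylinders form a π-system that generates the Borel sets.

*Surjectivity* (`surjOn_map_brng`). A sub-invariant `μ` is decomposed as `e^{-β} r_*s^*μ + κ`,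
where `κ` is carried by the singular vertices (`exists_singular_part`). Disintegrating
`e^{-β} (r, id)_* s^*μ + (id, ∞)_* κ` over `μ` gives a rule `f` by which a path at a given vertex
chooses its next edge or stops, using a uniform random number (`exists_randomisation`). Iterating
this rule with independent uniform numbers produces a random sequence of steps, which is almost
surely a boundary path (`ae_stepOK`, `good_pathW`). Its law, for a starting vertex distributed
according to `μ`, is quasi-invariant: by the Markov property (`measure_step`), a path with first
edge `e` continues as the random path from `s e`, where `e` is distributed according to
`e^{-β} s^*μ`.
-/

open MeasureTheory Set

namespace TopGraph

universe u
variable {V E : Type u} (r s : E → V)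

/-- Composability of a tuple of edges: the source of each edge is the range of the next. -/
def Comp (n : ℕ) (a : Fin n → E) : Prop :=
  ∀ i j : Fin n, (j : ℕ) = (i : ℕ) + 1 → s (a i) = r (a j)

/-- The space `E^n` of paths of length `n`; `E^0` is the vertex space `V`. -/
def PathN : ℕ → Type u
  | 0 => V
  | n + 1 => {a : Fin (n + 1) → E // Comp r s (n + 1) a}

/-- The space `E^∞` of infinite paths. -/
def PathInf : Type u := {a : ℕ → E // ∀ i : ℕ, s (a i) = r (a (i + 1))}

/-- The edges of a finite path. -/
def edgeOf : ∀ {n : ℕ}, PathN r s n → Fin n → E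
  | 0, _, i => absurd i.isLt (by omega)
  | _ + 1, q, i => q.1 i

/-- The source of a finite path (for a vertex, the vertex itself). -/
def srcFin : ∀ {n : ℕ}, PathN r s n → V
  | 0, v => v
  | n + 1, q => s (q.1 ⟨n, Nat.lt_succ_self n⟩)

/-- The range of a finite path (for a vertex, the vertex itself). -/
def rngFin : ∀ {n : ℕ}, PathN r s n → V
  | 0, v => v
  | n + 1, q => r (q.1 ⟨0, Nat.succ_pos n⟩)

/-- Truncation `a ↦ a(n)` of a finite path, with `a(0) = r(a)`. -/
def truncFin : ∀ {m n : ℕ}, n ≤ m → PathN r s m → PathN r s n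
  | 0, 0, _, q => q
  | _ + 1, 0, _, q => r (q.1 ⟨0, Nat.succ_pos _⟩)
  | 0, _ + 1, h, _ => absurd h (by omega)
  | _ + 1, _ + 1, h, q =>
    ⟨fun i => q.1 (Fin.castLE h i), fun i j hij =>
      q.2 (Fin.castLE h i) (Fin.castLE h j) (by simpa using hij)⟩

/-- Truncation `a ↦ a(n)` of an infinite path. -/
def truncInf (a : PathInf r s) : ∀ n : ℕ, PathN r s n
  | 0 => r (a.1 0)
  | n + 1 => ⟨fun i => a.1 i, fun i j hij => by
      show s (a.1 (i : ℕ)) = r (a.1 (j : ℕ))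
      rw [hij]
      exact a.2 (i : ℕ)⟩

/-- The finite path space `E* = ⊔ₙ E^n`. -/
def FinPath : Type u := Σ n : ℕ, PathN r s n

/-- Truncation of a finite path, as a map of `E*`. -/
def ftrunc (p : FinPath r s) (k : ℕ) (h : k ≤ p.1) : FinPath r s :=
  ⟨k, truncFin r s h p.2⟩

section Topology

variable [TopologicalSpace V] [TopologicalSpace E]

instance instTopPathN : ∀ n : ℕ, TopologicalSpace (PathN r s n)
  | 0 => (inferInstance : TopologicalSpace V)
  | n + 1 => (inferInstance : TopologicalSpace {a : Fin (n + 1) → E // Comp r s (n + 1) a})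

noncomputable instance instMeasPathN (n : ℕ) : MeasurableSpace (PathN r s n) := borel _

instance instTopPathInf : TopologicalSpace (PathInf r s) :=
  (inferInstance : TopologicalSpace {a : ℕ → E // ∀ i : ℕ, s (a i) = r (a (i + 1))})

instance instTopFinPath : TopologicalSpace (FinPath r s) :=
  (inferInstance : TopologicalSpace (Σ n : ℕ, PathN r s n))

/-- A vertex is regular if it has a relatively compact open neighborhood `U` with
`r⁻¹(cl U)` compact and `r(r⁻¹(U)) = U`. -/
def RegularVertex (v : V) : Prop :=
  ∃ U : Set V, IsOpen U ∧ v ∈ U ∧ IsCompact (closure U) ∧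
    IsCompact (r ⁻¹' closure U) ∧ r '' (r ⁻¹' U) = U

/-- The carrier of the boundary path space: finite or infinite paths. -/
def BPathCarrier : Type u := FinPath r s ⊕ PathInf r s

/-- Length of a (possibly infinite) path, in `ℕ∞`. -/
def blen : BPathCarrier r s → ℕ∞
  | .inl p => (p.1 : ℕ∞)
  | .inr _ => ⊤

/-- Truncation `a ↦ a(n)` of a boundary path, `n ≤ |a|`, valued in `E*`. -/
def btrunc : ∀ (x : BPathCarrier r s) (n : ℕ), (n : ℕ∞) ≤ blen r s x → FinPath r s
  | .inl p, n, h => ftrunc r s p n (by simpa [blen] using h)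
  | .inr a, n, _ => ⟨n, truncInf r s a n⟩

/-- The boundary path space `∂E`: singular finite paths together with infinite paths. -/
def BPath : Type u :=
  {x : BPathCarrier r s //
    ∀ p : FinPath r s, x = Sum.inl p → ¬ RegularVertex r (srcFin r s p.2)}

/-- The cylinder sets `Z(S) = {a ∈ ∂E : a(n) ∈ S for some n ≤ |a|}`. -/
def ZSet (S : Set (FinPath r s)) : Set (BPath r s) :=
  {x | ∃ (n : ℕ) (h : (n : ℕ∞) ≤ blen r s x.val), btrunc r s x.val n h ∈ S}

/-- The topology on `∂E` generated by the base `{Z(U) \ Z(K) : U open, K compact}`. -/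
instance instTopBPath : TopologicalSpace (BPath r s) :=
  TopologicalSpace.generateFrom
    {A | ∃ (U K : Set (FinPath r s)), IsOpen U ∧ IsCompact K ∧
      A = ZSet r s U \ ZSet r s K}

noncomputable instance instMeasBPath : MeasurableSpace (BPath r s) := borel _

end Topology

/-- The backwards shift on finite paths (acting as the identity on vertices). -/
def shiftF : FinPath r s → FinPath r s
  | ⟨0, v⟩ => ⟨0, v⟩
  | ⟨1, q⟩ => ⟨0, (s (q.1 ⟨0, Nat.one_pos⟩) : PathN r s 0)⟩
  | ⟨n + 2, q⟩ =>
    ⟨n + 1, ⟨fun i => q.1 i.succ, fun i j hij =>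
      q.2 i.succ j.succ (by simp [Fin.val_succ, hij])⟩⟩

/-- The backwards shift on the boundary path carrier. -/
def shiftC : BPathCarrier r s → BPathCarrier r s
  | .inl p => .inl (shiftF r s p)
  | .inr a => .inr ⟨fun i => a.1 (i + 1), fun i => a.2 (i + 1)⟩

section Vertex

variable [TopologicalSpace V] [TopologicalSpace E]

/-- The set of vertices `E⁰ ⊆ ∂E`. -/
def VtxSet : Set (BPath r s) := {x | ∃ v : V, x.val = Sum.inl ⟨0, (v : PathN r s 0)⟩}

/-- The range map `r : ∂E → E⁰`. -/
def brng (x : BPath r s) : V :=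
  match x.val with
  | .inl p => rngFin r s p.2
  | .inr a => r (a.1 0)

end Vertex

section Measures

variable [TopologicalSpace V] [TopologicalSpace E]
variable [MeasurableSpace V] [MeasurableSpace E]

/-- `ν` is the (sheaf-theoretic) pullback of `μ` along `f`. -/
def IsPullback {X Y : Type*} [TopologicalSpace X] [TopologicalSpace Y]
    [MeasurableSpace X] [MeasurableSpace Y] (f : X → Y)
    (ν : Measure X) (μ : Measure Y) : Prop :=
  ∀ U : Set X, IsOpen U → Set.InjOn f U →
    ∀ B : Set X, B ⊆ U → MeasurableSet B → ν B = μ (f '' B)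

/-- A measure `ν` on `∂E` is `β`-quasi-invariant: `σ*ν = e^β ν` on `∂E \ E⁰`, i.e.
`ν(B) = e^{-β} ν(σ(B))` for Borel `B` inside an open set `U ⊆ ∂E \ E⁰` on which `σ`
is injective. -/
def QuasiInv (β : ℝ) (ν : Measure (BPath r s)) : Prop :=
  ∀ U : Set (BPath r s), IsOpen U → Disjoint U (VtxSet r s) →
    Set.InjOn (fun x : BPath r s => shiftC r s x.val) U →
    ∀ B : Set (BPath r s), B ⊆ U → MeasurableSet B →
      ν B = ENNReal.ofReal (Real.exp (-β)) *
        ν (Subtype.val ⁻¹' (shiftC r s '' (Subtype.val '' B)))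

/-- A regular Borel measure `μ` on `E⁰` is `β`-sub-invariant: `Tμ ≤ e^β μ` with equality on
the regular vertices, where `T = r_* s*`. -/
def SubInv (β : ℝ) (μ : Measure V) : Prop :=
  μ.Regular ∧ ∃ sμ : Measure E, sμ.Regular ∧ IsPullback s sμ μ ∧
    Measure.map r sμ ≤ ENNReal.ofReal (Real.exp β) • μ ∧
    ∀ B : Set V, MeasurableSet B → (∀ v ∈ B, RegularVertex r v) →
      Measure.map r sμ B = ENNReal.ofReal (Real.exp β) * μ B

end Measures

section BPathN

variable [TopologicalSpace V] [TopologicalSpace E]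

/-- The `n`-th boundary path space `∂Eₙ = E⁰_sng ⊔ ⋯ ⊔ E^{n-1}_sng ⊔ E^n`. -/
def BPathN (n : ℕ) : Type u :=
  {p : FinPath r s // p.1 ≤ n ∧ (p.1 < n → ¬ RegularVertex r (srcFin r s p.2))}

/-- Cylinder sets in `∂Eₙ`. -/
def ZNSet (n : ℕ) (S : Set (FinPath r s)) : Set (BPathN r s n) :=
  {x | ∃ (k : ℕ) (h : k ≤ x.val.1), ftrunc r s x.val k h ∈ S}

instance instTopBPathN (n : ℕ) : TopologicalSpace (BPathN r s n) :=
  TopologicalSpace.generateFrom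
    {A | ∃ (U K : Set (FinPath r s)), IsOpen U ∧ IsCompact K ∧
      A = ZNSet r s n U \ ZNSet r s n K}

noncomputable instance instMeasBPathN (n : ℕ) : MeasurableSpace (BPathN r s n) := borel _

/-- The map `ρₙ : ∂Eₙ₊₁ → ∂Eₙ`, truncating paths of length `n+1` and fixing shorter paths. -/
def rho (n : ℕ) (x : BPathN r s (n + 1)) : BPathN r s n :=
  if h : x.val.1 = n + 1 then
    ⟨ftrunc r s x.val n (by omega), ⟨le_refl n, fun hlt => absurd hlt (lt_irrefl n)⟩⟩
  else
    ⟨x.val, ⟨by have := x.property.1; omega, fun hlt => x.property.2 (by omega)⟩⟩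

end BPathN

/-- The periodicity group of a boundary path. -/
def Per (x : BPathCarrier r s) : Set ℤ :=
  {z | ∃ k l : ℕ, (k : ℕ∞) ≤ blen r s x ∧ (l : ℕ∞) ≤ blen r s x ∧
    z = (k : ℤ) - (l : ℤ) ∧ (shiftC r s)^[k] x = (shiftC r s)^[l] x}

section Gpd

variable [TopologicalSpace V] [TopologicalSpace E]

/-- The graph groupoid `𝒢_E`, as a set of triples. -/
def GraphGpd : Set (BPath r s × ℤ × BPath r s) :=
  {t | ∃ k l : ℕ, (k : ℕ∞) ≤ blen r s t.1.val ∧ (l : ℕ∞) ≤ blen r s t.2.2.val ∧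
    t.2.1 = (k : ℤ) - (l : ℤ) ∧ (shiftC r s)^[k] t.1.val = (shiftC r s)^[l] t.2.2.val}

end Gpd

/-- The infinite path `c^∞` obtained by repeating a cycle `c`. -/
def cycInf {m : ℕ} (c : PathN r s (m + 1)) (hc : rngFin r s c = srcFin r s c) :
    PathInf r s :=
  ⟨fun i => c.1 ⟨i % (m + 1), Nat.mod_lt i (Nat.succ_pos m)⟩, by
    intro i
    have hlt : i % (m + 1) < m + 1 := Nat.mod_lt i (Nat.succ_pos m)
    show s (c.1 ⟨i % (m + 1), Nat.mod_lt i (Nat.succ_pos m)⟩) =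
      r (c.1 ⟨(i + 1) % (m + 1), Nat.mod_lt (i + 1) (Nat.succ_pos m)⟩)
    by_cases h1 : i % (m + 1) < m
    · have key : (i + 1) % (m + 1) = i % (m + 1) + 1 := by
        conv_lhs => rw [← Nat.div_add_mod i (m + 1)]
        rw [Nat.add_assoc, Nat.mul_add_mod, Nat.mod_eq_of_lt (by omega)]
      exact c.2 _ _ key
    · have h2 : i % (m + 1) = m := by omega
      have key : (i + 1) % (m + 1) = 0 := by
        conv_lhs => rw [← Nat.div_add_mod i (m + 1)]
        rw [Nat.add_assoc, Nat.mul_add_mod, h2, Nat.mod_self]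
      have e1 : (⟨i % (m + 1), Nat.mod_lt i (Nat.succ_pos m)⟩ : Fin (m + 1)) =
          ⟨m, Nat.lt_succ_self m⟩ := Fin.ext h2
      have e2 : (⟨(i + 1) % (m + 1), Nat.mod_lt (i + 1) (Nat.succ_pos m)⟩ : Fin (m + 1)) =
          ⟨0, Nat.succ_pos m⟩ := Fin.ext key
      rw [e1, e2]
      exact hc.symm⟩

/-- Prepending a finite path `b` to an infinite path `d` with `s(b) = r(d)`. -/
def prepend : ∀ {n : ℕ} (b : PathN r s n) (d : PathInf r s),
    srcFin r s b = r (d.1 0) → PathInf r s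
  | 0, _, d, _ => d
  | n + 1, b, d, h =>
    ⟨fun i => if h' : i < n + 1 then b.1 ⟨i, h'⟩ else d.1 (i - (n + 1)), by
      intro i
      show s (if h' : i < n + 1 then b.1 ⟨i, h'⟩ else d.1 (i - (n + 1))) =
        r (if h' : i + 1 < n + 1 then b.1 ⟨i + 1, h'⟩ else d.1 (i + 1 - (n + 1)))
      by_cases h1 : i + 1 < n + 1
      · rw [dif_pos (by omega : i < n + 1), dif_pos h1]
        exact b.2 ⟨i, by omega⟩ ⟨i + 1, h1⟩ rfl
      · by_cases h2 : i < n + 1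
        · rw [dif_pos h2, dif_neg h1]
          have hi : i = n := by omega
          have h0 : i + 1 - (n + 1) = 0 := by omega
          have e : (⟨i, h2⟩ : Fin (n + 1)) = ⟨n, Nat.lt_succ_self n⟩ := Fin.ext hi
          rw [h0, e]
          exact h
        · rw [dif_neg h2, dif_neg h1]
          have h3 : i + 1 - (n + 1) = (i - (n + 1)) + 1 := by omega
          rw [h3]
          exact d.2 (i - (n + 1))⟩

/-- `b` ends with `c`: `b = a·c` for some finite path `a`. -/
def EndsWith {n m : ℕ} (b : PathN r s n) (c : PathN r s m) : Prop :=
  ∃ h : m ≤ n, ∀ i : Fin m,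
    edgeOf r s b ⟨n - m + (i : ℕ), by have := i.isLt; omega⟩ = edgeOf r s c i

/-- `x` is eventually cyclic with cycle of length `m + 1`: `x = b c^∞` for a cycle `c` of
length `m+1` and an exit `b` of `c`. -/
def EvCyclicWitness (x : BPathCarrier r s) (m : ℕ) : Prop :=
  ∃ (c : PathN r s (m + 1)) (hc : rngFin r s c = srcFin r s c)
    (k : ℕ) (b : PathN r s k)
    (hlink : srcFin r s b = r ((cycInf r s c hc).1 0)),
    srcFin r s b = rngFin r s c ∧ ¬ EndsWith r s b c ∧
    x = Sum.inr (prepend r s b (cycInf r s c hc) hlink)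


section

open Filter Topology OnePoint

variable {r s}
set_option linter.unusedSectionVars false

/-! ### One-point compactifications and regularity of measures -/

section General

theorem secondCountable_onePoint (X : Type*) [TopologicalSpace X] [T2Space X]
    [LocallyCompactSpace X] [SecondCountableTopology X] :
    SecondCountableTopology (OnePoint X) := by
  let K := CompactExhaustion.choice X
  let B : Set (Set (OnePoint X)) :=
    ((fun b : Set X => ((↑) '' b : Set (OnePoint X))) '' TopologicalSpace.countableBasis X) ∪
      range fun n => ((↑) '' K n : Set (OnePoint X))ᶜ
  have hB : TopologicalSpace.IsTopologicalBasis B := by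
    refine TopologicalSpace.isTopologicalBasis_of_isOpen_of_nhds ?_ ?_
    · rintro u (⟨b, hb, rfl⟩ | ⟨n, rfl⟩)
      · exact isOpen_image_coe.2 (TopologicalSpace.isOpen_of_mem_countableBasis hb)
      · exact isOpen_compl_image_coe.2 ⟨(K.isCompact n).isClosed, K.isCompact n⟩
    · intro a u ha hu
      induction a using OnePoint.rec with
      | infty =>
        obtain ⟨n, hn⟩ := K.exists_superset_of_isCompact ((isOpen_iff_of_mem ha).1 hu).2
        refine ⟨_, Or.inr ⟨n, rfl⟩, ?_, ?_⟩
        · simp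
        · intro y hy
          induction y using OnePoint.rec with
          | infty => exact ha
          | coe y =>
            by_contra hyu
            exact hy ⟨y, hn hyu, rfl⟩
      | coe a =>
        obtain ⟨b, hb, hab, hbu⟩ :=
          (TopologicalSpace.isBasis_countableBasis X).exists_subset_of_mem_open
            (show a ∈ ((↑) ⁻¹' u : Set X) from ha) (hu.preimage continuous_coe)
        exact ⟨_, Or.inl ⟨b, hb, rfl⟩, ⟨a, hab, rfl⟩, image_subset_iff.2 hbu⟩
  exact hB.secondCountableTopology
    (((TopologicalSpace.countable_countableBasis X).image _).union (countable_range _))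

theorem polish_onePoint (X : Type*) [TopologicalSpace X] [T2Space X]
    [LocallyCompactSpace X] [SecondCountableTopology X] : PolishSpace (OnePoint X) := by
  have := secondCountable_onePoint X
  let := TopologicalSpace.metrizableSpaceMetric (OnePoint X)
  infer_instance

theorem polish_of_lcsc (X : Type*) [TopologicalSpace X] [T2Space X]
    [LocallyCompactSpace X] [SecondCountableTopology X] : PolishSpace X := by
  have := polish_onePoint X
  have h : IsOpen (range ((↑) : X → OnePoint X)) := isOpen_range_coe
  have := h.polishSpace
  exact (isOpenEmbedding_coe (X := X)).isEmbedding.toHomeomorph.isClosedEmbedding.polishSpace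

theorem regular_of_locallyFinite {X : Type*} [TopologicalSpace X] [T2Space X]
    [LocallyCompactSpace X] [SecondCountableTopology X] [MeasurableSpace X] [BorelSpace X]
    (μ : Measure X) (h : IsLocallyFiniteMeasure μ) : μ.Regular := inferInstance

/-- The one-point compactification `E ∪ {∞}` carries its Borel σ-algebra. -/
noncomputable instance instMeasOnePoint (X : Type*) [TopologicalSpace X] :
    MeasurableSpace (OnePoint X) := borel _

noncomputable instance instBorelOnePoint (X : Type*) [TopologicalSpace X] :
    BorelSpace (OnePoint X) := ⟨rfl⟩

/-- Measurability of a map into `X ∪ {∞}` is tested on open subsets of `X`: an open neighbourhood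
of `∞` is the complement of `X` together with an open subset of `X`. -/
theorem measurable_to_onePoint {X Y : Type*} [TopologicalSpace X] [T2Space X] [MeasurableSpace X]
    [BorelSpace X] [MeasurableSpace Y] (g : Y → OnePoint X)
    (h : ∀ U : Set X, IsOpen U → MeasurableSet (g ⁻¹' ((↑) '' U))) : Measurable g := by
  refine measurable_of_isOpen fun O hO => ?_
  by_cases hi : ∞ ∈ O
  · have hc := ((isOpen_iff_of_mem hi).1 hO)
    have e : g ⁻¹' O = (g ⁻¹' ((↑) '' (univ : Set X)))ᶜ ∪ g ⁻¹' ((↑) '' ((↑) ⁻¹' O : Set X)) := by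
      ext y
      simp only [mem_preimage, mem_union, mem_compl_iff]
      induction g y using OnePoint.rec with
      | infty => simp [hi]
      | coe z => simp
    rw [e]
    exact (h _ isOpen_univ).compl.union (h _ (hO.preimage continuous_coe))
  · have e : g ⁻¹' O = g ⁻¹' ((↑) '' ((↑) ⁻¹' O : Set X)) := by
      rw [image_preimage_eq_inter_range]
      ext y
      simp only [mem_preimage, mem_inter_iff, iff_self_and]
      intro hy
      have : g y ≠ ∞ := fun h => hi (h ▸ hy)
      exact OnePoint.ne_infty_iff_exists.1 this
    rw [e]
    exact h _ (hO.preimage continuous_coe)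

end General

/-! ### Coordinates of boundary paths -/

section Coord
variable [TopologicalSpace V] [TopologicalSpace E]

/-- The truncation `x ↦ x(n)`, with value `∞` when `n > |x|`. -/
def tr (n : ℕ) (x : BPath r s) : OnePoint (PathN r s n) :=
  match x.val with
  | .inl ⟨m, q⟩ => if h : n ≤ m then ((truncFin r s h q : PathN r s n) : OnePoint _) else ∞
  | .inr a => ((truncInf r s a n : PathN r s n) : OnePoint _)

/-- The `i`-th edge of a boundary path, with value `∞` when `i ≥ |x|`. -/
def ed (x : BPath r s) (i : ℕ) : OnePoint E :=
  match x.val with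
  | .inl ⟨m, q⟩ => if h : i < m then ((edgeOf r s q ⟨i, h⟩ : E) : OnePoint E) else ∞
  | .inr a => ((a.1 i : E) : OnePoint E)

/-- The cylinder sets that define the topology of `∂E`, in terms of the truncations `tr`. -/
theorem mem_ZSet_iff (S : Set (FinPath r s)) (x : BPath r s) :
    x ∈ ZSet r s S ↔ ∃ n, ∃ p : PathN r s n, tr n x = (p : OnePoint _) ∧
      (⟨n, p⟩ : FinPath r s) ∈ S := by
  obtain ⟨⟨m, q⟩ | a, hx⟩ := x
  · constructor
    · rintro ⟨n, h, hS⟩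
      have h' : n ≤ m := by simpa [blen] using h
      exact ⟨n, truncFin r s h' q, by simp [tr, h'], hS⟩
    · rintro ⟨n, p, hp, hS⟩
      by_cases h : n ≤ m
      · refine ⟨n, by simpa [blen] using h, ?_⟩
        simp only [tr, h, dite_true, OnePoint.coe_eq_coe] at hp
        subst hp
        exact hS
      · simp [tr, h] at hp
  · constructor
    · rintro ⟨n, h, hS⟩
      exact ⟨n, truncInf r s a n, rfl, hS⟩
    · rintro ⟨n, p, hp, hS⟩
      refine ⟨n, le_top, ?_⟩
      simp only [tr, OnePoint.coe_eq_coe] at hp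
      subst hp
      exact hS

theorem tr_zero (x : BPath r s) :
    tr 0 x = ((brng r s x : PathN r s 0) : OnePoint (PathN r s 0)) := by
  obtain ⟨⟨_ | m, q⟩ | a, hx⟩ := x <;> rfl

/-- A truncation of positive length amounts to the edges that it consists of. -/
theorem tr_succ_iff (n : ℕ) (x : BPath r s) (p : PathN r s (n + 1)) :
    tr (n + 1) x = (p : OnePoint _) ↔ ∀ i : Fin (n + 1), ed x i = ((p.1 i : E) : OnePoint E) := by
  obtain ⟨⟨_ | m, q⟩ | a, hx⟩ := x
  · simp only [tr, ed]
    constructor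
    · intro h; simp at h
    · intro h; have := h 0; simp at this
  · simp only [tr, ed]
    by_cases h : n + 1 ≤ m + 1
    · simp only [h, dite_true, OnePoint.coe_eq_coe]
      constructor
      · rintro rfl i
        rw [dif_pos (by omega)]
        rfl
      · intro hi
        refine Subtype.ext (funext fun i => ?_)
        have := hi i
        rw [dif_pos (by omega)] at this
        exact OnePoint.coe_eq_coe.1 this
    · simp only [h, dite_false]
      constructor
      · intro h; simp at h
      · intro hi
        have := hi (Fin.last n)
        rw [dif_neg (by simpa using h)] at this
        simp at this
  · simp only [tr, ed, OnePoint.coe_eq_coe]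
    constructor
    · rintro rfl i; rfl
    · intro h
      exact Subtype.ext (funext h)

theorem ed_succ_infty (x : BPath r s) (i : ℕ) (h : ed x i = ∞) : ed x (i + 1) = ∞ := by
  obtain ⟨⟨m, q⟩ | a, hx⟩ := x
  · simp only [ed] at h ⊢
    by_cases hi : i < m
    · simp [hi] at h
    · rw [dif_neg (by omega)]
  · simp [ed] at h

theorem ed_zero_r (x : BPath r s) (e : E) (h : ed x 0 = (e : OnePoint E)) : r e = brng r s x := by
  obtain ⟨⟨_ | m, q⟩ | a, hx⟩ := x
  · simp [ed] at h
  · simp only [ed] at h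
    rw [dif_pos (by omega)] at h
    rw [← OnePoint.coe_eq_coe.1 h]; rfl
  · rw [← OnePoint.coe_eq_coe.1 h]; rfl

theorem ed_succ_r (x : BPath r s) (i : ℕ) (e e' : E) (h : ed x i = (e : OnePoint E))
    (h' : ed x (i + 1) = (e' : OnePoint E)) : s e = r e' := by
  obtain ⟨⟨_ | m, q⟩ | a, hx⟩ := x
  · simp [ed] at h
  · simp only [ed] at h h'
    by_cases hi : i + 1 < m + 1
    · rw [dif_pos (by omega)] at h h'
      rw [← OnePoint.coe_eq_coe.1 h, ← OnePoint.coe_eq_coe.1 h']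
      exact q.2 _ _ rfl
    · rw [dif_neg hi] at h'; simp at h'
  · rw [← OnePoint.coe_eq_coe.1 h, ← OnePoint.coe_eq_coe.1 h']
    exact a.2 i

theorem ed_zero_sing (x : BPath r s) (h : ed x 0 = ∞) : ¬ RegularVertex r (brng r s x) := by
  obtain ⟨⟨_ | m, q⟩ | a, hx⟩ := x
  · exact hx _ rfl
  · simp only [ed] at h
    rw [dif_pos (by omega)] at h
    simp at h
  · simp [ed] at h

theorem ed_succ_sing (x : BPath r s) (i : ℕ) (e : E) (h : ed x i = (e : OnePoint E))
    (h' : ed x (i + 1) = ∞) : ¬ RegularVertex r (s e) := by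
  obtain ⟨⟨_ | m, q⟩ | a, hx⟩ := x
  · simp [ed] at h
  · simp only [ed] at h h'
    by_cases hi : i < m + 1
    · by_cases hi' : i + 1 < m + 1
      · rw [dif_pos hi'] at h'; simp at h'
      · rw [dif_pos hi] at h
        obtain rfl : i = m := by omega
        rw [← OnePoint.coe_eq_coe.1 h]
        exact hx _ rfl
    · rw [dif_neg hi] at h; simp at h
  · simp [ed] at h'

variable (r s) in
/-- Coordinate sequences of boundary paths: `v` is the range and `a` lists the edges, padded by
`∞`; a path may only end at a singular vertex. -/
structure Good (ω : V × (ℕ → OnePoint E)) : Prop where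
  infty : ∀ i, ω.2 i = ∞ → ω.2 (i + 1) = ∞
  rng : ∀ e : E, ω.2 0 = (e : OnePoint E) → r e = ω.1
  link : ∀ i, ∀ e e' : E, ω.2 i = (e : OnePoint E) → ω.2 (i + 1) = (e' : OnePoint E) → s e = r e'
  sing_zero : ω.2 0 = ∞ → ¬ RegularVertex r ω.1
  sing_succ : ∀ i, ∀ e : E, ω.2 i = (e : OnePoint E) → ω.2 (i + 1) = ∞ → ¬ RegularVertex r (s e)

/-- The coordinates of a boundary path: its range and its sequence of edges. -/
def Phi (x : BPath r s) : V × (ℕ → OnePoint E) := (brng r s x, ed x)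

theorem good_Phi (x : BPath r s) : Good r s (Phi x) :=
  ⟨ed_succ_infty x, ed_zero_r x, ed_succ_r x, ed_zero_sing x, ed_succ_sing x⟩

theorem Phi_injective : Function.Injective (Phi : BPath r s → _) := by
  intro x y h
  have hv : brng r s x = brng r s y := congrArg Prod.fst h
  have he : ∀ i, ed x i = ed y i := fun i => congrFun (congrArg Prod.snd h) i
  have key : ∀ m (q : PathN r s m) m' (q' : PathN r s m') hx hy,
      brng r s ⟨.inl ⟨m, q⟩, hx⟩ = brng r s ⟨.inl ⟨m', q'⟩, hy⟩ →
      (∀ i, ed (r := r) (s := s) ⟨.inl ⟨m, q⟩, hx⟩ i = ed (r := r) (s := s) ⟨.inl ⟨m', q'⟩, hy⟩ i) →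
      m ≤ m' := by
    intro m q m' q' hx hy _ he
    by_contra hlt
    have := he m'
    simp [ed, not_le.1 hlt] at this
  obtain ⟨⟨m, q⟩ | a, hx⟩ := x <;> obtain ⟨⟨m', q'⟩ | a', hy⟩ := y
  · have h1 := key _ _ _ _ hx hy hv he
    have h2 := key _ _ _ _ hy hx hv.symm fun i => (he i).symm
    obtain rfl : m = m' := le_antisymm h1 h2
    cases m with
    | zero =>
      have : q = q' := hv
      subst this; rfl
    | succ m =>
      have : q = q' := by
        refine Subtype.ext (funext fun i => ?_)
        have := he i
        simp only [ed, i.2, dite_true, OnePoint.coe_eq_coe] at this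
        exact this
      subst this; rfl
  · have := he m; simp [ed] at this
  · have := he m'; simp [ed] at this
  · have : a = a' := Subtype.ext (funext fun i => OnePoint.coe_eq_coe.1 (he i))
    subst this; rfl

/-- The conditions of `Good` characterise the coordinates of boundary paths: the path is finite or
infinite according to whether `∞` occurs among the edges. -/
theorem exists_of_good {ω : V × (ℕ → OnePoint E)} (h : Good r s ω) :
    ∃ x : BPath r s, Phi x = ω := by
  obtain ⟨v, a⟩ := ω
  by_cases hinf : ∃ n, a n = ∞
  · classical
    let m := Nat.find hinf
    have hm : a m = ∞ := Nat.find_spec hinf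
    have hlt : ∀ i, i < m → ∃ e : E, (e : OnePoint E) = a i := fun i hi =>
      OnePoint.ne_infty_iff_exists.1 (Nat.find_min hinf hi)
    have hge : ∀ k, a (m + k) = ∞ := by
      intro k
      induction k with
      | zero => exact hm
      | succ k ih => exact h.infty _ ih
    have hge' : ∀ i, ¬ i < m → a i = ∞ := fun i hi => by
      obtain ⟨k, rfl⟩ := Nat.exists_eq_add_of_le (not_lt.1 hi)
      exact hge k
    clear_value m
    cases m with
    | zero =>
      refine ⟨⟨.inl ⟨0, (v : PathN r s 0)⟩, ?_⟩, ?_⟩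
      · rintro p hp
        obtain rfl := Sum.inl_injective hp
        exact h.sing_zero hm
      · refine Prod.ext rfl (funext fun i => ?_)
        exact (hge' i (by omega)).symm
    | succ m =>
      choose f hf using hlt
      refine ⟨⟨.inl ⟨m + 1, ⟨fun i => f i i.2, ?_⟩⟩, ?_⟩, ?_⟩
      · intro i j hij
        refine h.link i _ _ (hf _ _).symm ?_
        rw [hf]
        exact congrArg a hij.symm
      · rintro p hp
        obtain rfl := Sum.inl_injective hp
        exact h.sing_succ m _ (hf m (by omega)).symm hm
      · refine Prod.ext (h.rng _ (hf 0 (by omega)).symm) (funext fun i => ?_)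
        simp only [Phi, ed]
        split_ifs with hi
        · exact hf i hi
        · exact (hge' i hi).symm
  · push Not at hinf
    choose f hf using fun i => OnePoint.ne_infty_iff_exists.1 (hinf i)
    refine ⟨⟨.inr ⟨f, fun i => h.link i _ _ (hf i).symm (hf (i + 1)).symm⟩, ?_⟩, ?_⟩
    · rintro p hp
      simp at hp
    · exact Prod.ext (h.rng _ (hf 0).symm) (funext fun i => hf i)

theorem range_Phi : range (Phi : BPath r s → _) = {ω | Good r s ω} := by
  ext ω
  exact ⟨by rintro ⟨x, rfl⟩; exact good_Phi x, exists_of_good⟩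

theorem mem_VtxSet_iff (x : BPath r s) : x ∈ VtxSet r s ↔ ed x 0 = ∞ := by
  obtain ⟨⟨_ | m, q⟩ | a, hx⟩ := x
  · exact ⟨fun _ => rfl, fun _ => ⟨q, rfl⟩⟩
  · constructor
    · rintro ⟨v, hv⟩
      have := congrArg Sigma.fst (Sum.inl_injective hv)
      simp at this
    · intro h
      simp [ed] at h
  · constructor
    · rintro ⟨v, hv⟩; simp at hv
    · intro h; simp [ed] at h

/-- The backwards shift, as a self-map of `∂E`. -/
def sh (x : BPath r s) : BPath r s :=
  ⟨shiftC r s x.val, by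
    obtain ⟨⟨_ | _ | m, q⟩ | a, hx⟩ := x
    · rintro p hp
      obtain rfl := Sum.inl_injective hp
      exact hx _ rfl
    · rintro p hp
      obtain rfl := Sum.inl_injective hp
      exact hx ⟨0 + 1, q⟩ rfl
    · rintro p hp
      obtain rfl := Sum.inl_injective hp
      exact hx ⟨m + 1 + 1, q⟩ rfl
    · rintro p hp
      simp [shiftC] at hp⟩

theorem ed_sh (x : BPath r s) (i : ℕ) : ed (sh x) i = ed x (i + 1) := by
  obtain ⟨⟨_ | _ | m, q⟩ | a, hx⟩ := x
  · simp [ed, sh, shiftC, shiftF]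
  · simp [ed, sh, shiftC, shiftF]
  · simp [ed, sh, shiftC, shiftF, edgeOf]
  · simp [ed, sh, shiftC]

theorem brng_sh_coe (x : BPath r s) (e : E) (h : ed x 0 = (e : OnePoint E)) :
    brng r s (sh x) = s e := by
  obtain ⟨⟨_ | _ | m, q⟩ | a, hx⟩ := x
  · simp [ed] at h
  · simp only [ed] at h
    rw [dif_pos (by omega)] at h
    rw [← OnePoint.coe_eq_coe.1 h]; rfl
  · simp only [ed] at h
    rw [dif_pos (by omega)] at h
    rw [← OnePoint.coe_eq_coe.1 h]
    exact (q.2 ⟨0, by omega⟩ ⟨1, by omega⟩ rfl).symm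
  · rw [← OnePoint.coe_eq_coe.1 h]
    exact (a.2 0).symm

theorem brng_sh_infty (x : BPath r s) (h : ed x 0 = ∞) : brng r s (sh x) = brng r s x := by
  obtain ⟨⟨_ | m, q⟩ | a, hx⟩ := x
  · rfl
  · simp [ed] at h
  · simp [ed] at h

/-- An edge `e` can be prepended to every boundary path with range `s e`. -/
theorem exists_cons (e : E) (y : BPath r s) (h : s e = brng r s y) :
    ∃ x : BPath r s, ed x 0 = (e : OnePoint E) ∧ sh x = y := by
  have hy := good_Phi y
  obtain ⟨x, hx⟩ := exists_of_good (r := r) (s := s)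
    (ω := (r e, fun i => Nat.casesOn i (e : OnePoint E) (ed y))) (by
      refine ⟨?_, ?_, ?_, ?_, ?_⟩
      · rintro (_ | i) hi
        · simp at hi
        · exact hy.infty i hi
      · intro e' he'
        rw [OnePoint.coe_eq_coe.1 he']
      · rintro (_ | i) e₁ e₂ h1 h2
        · rw [← OnePoint.coe_eq_coe.1 h1, h]
          exact (hy.rng _ h2).symm
        · exact hy.link i _ _ h1 h2
      · intro h; simp at h
      · rintro (_ | i) e₁ h1 h2
        · rw [← OnePoint.coe_eq_coe.1 h1, h]
          exact hy.sing_zero h2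
        · exact hy.sing_succ i _ h1 h2)
  have h0 : ed x 0 = (e : OnePoint E) := congrFun (congrArg Prod.snd hx) 0
  refine ⟨x, h0, Phi_injective (Prod.ext ?_ (funext fun i => ?_))⟩
  · exact (brng_sh_coe x e h0).trans h
  · exact (ed_sh x i).trans (congrFun (congrArg Prod.snd hx) (i + 1))

/-- A boundary path of positive length is determined by its first edge and its shift. -/
theorem eq_of_ed_sh {x y : BPath r s} {e : E} (hx : ed x 0 = (e : OnePoint E))
    (hy : ed y 0 = (e : OnePoint E)) (h : sh x = sh y) : x = y := by
  refine Phi_injective (Prod.ext ((ed_zero_r x e hx).symm.trans (ed_zero_r y e hy)) (funext ?_))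
  rintro (_ | i)
  · exact hx.trans hy.symm
  · show ed x (i + 1) = ed y (i + 1)
    rw [← ed_sh, ← ed_sh, h]

/-- The set `σ(B)` in the definition of `QuasiInv`, where the shift is a map of carriers, is the
image of `B` under the shift of `∂E`. -/
theorem quasi_image (B : Set (BPath r s)) :
    (Subtype.val ⁻¹' (shiftC r s '' (Subtype.val '' B)) : Set (BPath r s)) = sh '' B := by
  ext y
  constructor
  · rintro ⟨_, ⟨x, hx, rfl⟩, h⟩
    exact ⟨x, hx, Subtype.ext h⟩
  · rintro ⟨x, hx, rfl⟩
    exact ⟨_, ⟨x, hx, rfl⟩, rfl⟩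

end Coord

/-! ### The topology of the boundary path space -/

section Topo
variable [TopologicalSpace V] [TopologicalSpace E]

theorem isClosed_comp [T2Space V] (hr : Continuous r) (hs : Continuous s) (n : ℕ) :
    IsClosed {a : Fin n → E | Comp r s n a} := by
  simp only [Comp, ofPred_forall]
  refine isClosed_iInter fun i => isClosed_iInter fun j => isClosed_iInter fun _ => ?_
  exact isClosed_eq (hs.comp (continuous_apply i)) (hr.comp (continuous_apply j))

theorem t2_PathN [T2Space V] [T2Space E] : ∀ n, T2Space (PathN r s n)
  | 0 => inferInstanceAs (T2Space V)
  | n + 1 => inferInstanceAs (T2Space {a : Fin (n + 1) → E // Comp r s (n + 1) a})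

theorem sc_PathN [SecondCountableTopology V] [SecondCountableTopology E] :
    ∀ n, SecondCountableTopology (PathN r s n)
  | 0 => inferInstanceAs (SecondCountableTopology V)
  | n + 1 => (IsEmbedding.subtypeVal (p := Comp r s (n + 1))).secondCountableTopology

theorem lc_PathN [T2Space V] [LocallyCompactSpace V] [LocallyCompactSpace E] (hr : Continuous r)
    (hs : Continuous s) : ∀ n, LocallyCompactSpace (PathN r s n)
  | 0 => inferInstanceAs (LocallyCompactSpace V)
  | n + 1 => (isClosed_comp hr hs (n + 1)).isClosedEmbedding_subtypeVal.locallyCompactSpace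

theorem continuous_truncFin_succ (hr : Continuous r) : ∀ n : ℕ,
    Continuous (truncFin r s (Nat.le_succ n) : PathN r s (n + 1) → PathN r s n)
  | 0 => show Continuous fun p : {a : Fin 1 → E // Comp r s 1 a} => r (p.1 0) from
      hr.comp ((continuous_apply _).comp continuous_subtype_val)
  | n + 1 => Continuous.subtype_mk (p := Comp r s (n + 1))
      (f := fun p : {a : Fin (n + 2) → E // Comp r s (n + 2) a} => fun i => p.1 (Fin.castLE _ i))
      (continuous_pi fun _ => (continuous_apply _).comp continuous_subtype_val) _

/-- The inclusion `Eⁿ ⊆ E*`. -/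
def inc (n : ℕ) (p : PathN r s n) : FinPath r s := ⟨n, p⟩

theorem mem_ZSet_inc (n : ℕ) (U : Set (PathN r s n)) (x : BPath r s) :
    x ∈ ZSet r s (inc n '' U) ↔ tr n x ∈ ((↑) '' U : Set (OnePoint (PathN r s n))) := by
  rw [mem_ZSet_iff]
  constructor
  · rintro ⟨m, p, h, q, hq, e⟩
    obtain ⟨rfl, e⟩ := Sigma.mk.inj_iff.1 e
    obtain rfl := eq_of_heq e
    exact ⟨_, hq, h.symm⟩
  · rintro ⟨p, hp, h⟩
    exact ⟨n, p, h.symm, p, hp, rfl⟩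

theorem isOpen_ZSet_coord (n : ℕ) (U : Set (PathN r s n)) (hU : IsOpen U) :
    IsOpen ((tr n : BPath r s → _) ⁻¹' ((↑) '' U)) := by
  refine TopologicalSpace.isOpen_generateFrom_of_mem
    ⟨inc n '' U, ∅, (isOpenMap_sigmaMk (i := n) _ hU :), isCompact_empty, ?_⟩
  ext x
  rw [Set.mem_sdiff, mem_ZSet_inc]
  exact ⟨fun h => ⟨h, fun ⟨_, _, h⟩ => h⟩, fun h => h.1⟩

theorem isOpen_compl_ZSet_coord (n : ℕ) (K : Set (PathN r s n)) (hK : IsCompact K) :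
    IsOpen ((tr n : BPath r s → _) ⁻¹' ((↑) '' K)ᶜ) := by
  refine TopologicalSpace.isOpen_generateFrom_of_mem
    ⟨univ, inc n '' K, isOpen_univ, (hK.image (continuous_sigmaMk (i := n)) :), ?_⟩
  ext x
  rw [Set.mem_sdiff, mem_ZSet_inc]
  exact ⟨fun h => ⟨(mem_ZSet_iff _ _).2 ⟨0, _, tr_zero x, trivial⟩, h⟩, fun h => h.2⟩

/-- The truncations of all orders. -/
def Psi (x : BPath r s) (n : ℕ) : OnePoint (PathN r s n) := tr n x

/-- The topology of `∂E` is the one pulled back from `∏ₙ (Eⁿ ∪ {∞})` by the truncations. -/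
theorem inducing_Psi [T2Space V] [T2Space E] : IsInducing (Psi : BPath r s → _) := by
  have := t2_PathN (r := r) (s := s)
  refine ⟨le_antisymm ?_ ?_⟩
  · rw [← continuous_iff_le_induced]
    refine continuous_pi fun n => continuous_def.2 fun O hO => ?_
    -- Neighbourhoods of `∞` are complements of compact sets of paths of length `n`.
    by_cases hi : ∞ ∈ O
    · have hc := ((isOpen_iff_of_mem hi).1 hO).2
      convert isOpen_compl_ZSet_coord n _ hc using 1
      refine congrArg _ ?_
      ext z
      induction z using OnePoint.rec with
      | infty => simp [hi]
      | coe z => simp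
    · convert isOpen_ZSet_coord n _ (hO.preimage continuous_coe) using 1
      refine congrArg _ ?_
      ext z
      induction z using OnePoint.rec with
      | infty => simp [hi]
      | coe z => simp
  · refine le_generateFrom ?_
    rintro _ ⟨U, K, hU, hK, rfl⟩
    -- A cylinder set imposes a condition on each of the truncations.
    have hZ : ∀ S : Set (FinPath r s), ZSet r s S =
        (Psi : BPath r s → _) ⁻¹' ⋃ n, (fun ω => ω n) ⁻¹' ((↑) '' (inc n ⁻¹' S)) := by
      intro S
      ext x
      rw [mem_ZSet_iff, mem_preimage, mem_iUnion]
      exact exists_congr fun n => exists_congr fun p =>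
        ⟨fun h => ⟨h.2, h.1.symm⟩, fun h => ⟨h.2.symm, h.1⟩⟩
    refine @IsOpen.sdiff _ _ _ (_) ?_ ?_
    · rw [hZ]
      refine ⟨_, isOpen_iUnion fun n => ?_, rfl⟩
      exact (isOpen_image_coe.2 (hU.preimage (continuous_sigmaMk (i := n)) :)).preimage
        (continuous_apply n)
    · -- A compact subset of the disjoint union `E*` meets finitely many `Eⁿ`, each in a compact
      -- set.
      obtain ⟨I, t, hI, ht, rfl⟩ := IsCompact.sigma_exists_finite_sigma_eq _ hK
      have e : ZSet r s (I.sigma t) =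
          (Psi : BPath r s → _) ⁻¹' ⋃ n ∈ I, (fun ω => ω n) ⁻¹' ((↑) '' (t n)) := by
        ext x
        refine (mem_ZSet_iff _ x).trans ?_
        rw [mem_preimage, mem_iUnion₂]
        constructor
        · rintro ⟨n, p, h, hn, hp⟩; exact ⟨n, hn, p, hp, h.symm⟩
        · rintro ⟨n, hn, p, hp, h⟩; exact ⟨n, p, h.symm, hn, hp⟩
      rw [e]
      refine isClosed_induced_iff.2 ⟨_, hI.isClosed_biUnion fun n _ => ?_, rfl⟩
      refine IsClosed.preimage (continuous_apply n) ?_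
      exact isClosed_image_coe.2 ⟨(ht n).isClosed, ht n⟩

theorem continuous_tr [T2Space V] [T2Space E] (n : ℕ) : Continuous (tr n : BPath r s → _) :=
  (continuous_apply n).comp inducing_Psi.continuous

/-- If the `n`-th edge exists, counted from `0`, then so does the truncation to length `n + 1`. -/
theorem exists_tr_succ (x : BPath r s) (n : ℕ) (h : ed x n ≠ ∞) :
    ∃ p : PathN r s (n + 1), tr (n + 1) x = (p : OnePoint _) := by
  have hne : ∀ k, ed x (n - k) ≠ ∞ := by
    intro k
    induction k with
    | zero => exact h
    | succ k ih =>
      intro hk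
      by_cases hkn : k + 1 ≤ n
      · apply ih
        have := ed_succ_infty x _ hk
        rwa [show n - (k + 1) + 1 = n - k by omega] at this
      · rw [show n - (k + 1) = n - k by omega] at hk
        exact ih hk
  have hex : ∀ i : Fin (n + 1), ∃ e : E, (e : OnePoint E) = ed x i := fun i => by
    have := hne (n - i)
    rw [show n - (n - (i : ℕ)) = i by omega] at this
    exact OnePoint.ne_infty_iff_exists.1 this
  choose f hf using hex
  refine ⟨⟨f, fun i j hij => ed_succ_r x i _ _ (hf i).symm ?_⟩,
    (tr_succ_iff n x _).2 fun i => (hf i).symm⟩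
  rw [← hij, hf]

/-- The last edge of a path. -/
def lastE {n : ℕ} (p : PathN r s (n + 1)) : E := p.1 (Fin.last n)

theorem continuous_edge {n : ℕ} (i : Fin (n + 1)) :
    Continuous (fun p : PathN r s (n + 1) => p.1 i) :=
  (continuous_apply i).comp continuous_subtype_val

/-- The `n`-th edge is a function of the truncation to length `n + 1`, which makes edges
accessible to the topology of `∂E`. -/
theorem ed_eq (x : BPath r s) (n : ℕ) : ed x n = (tr (n + 1) x).map lastE := by
  by_cases h : ed x n = ∞
  · rw [h]
    rcases hx : tr (n + 1) x with _ | p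
    · rfl
    · have := (tr_succ_iff n x p).1 hx (Fin.last n)
      rw [Fin.val_last, h] at this
      simp at this
  · obtain ⟨p, hp⟩ := exists_tr_succ x n h
    rw [hp]
    exact (tr_succ_iff n x p).1 hp (Fin.last n)

theorem Psi_injective : Function.Injective (Psi : BPath r s → _) := by
  intro x y h
  refine Phi_injective (Prod.ext ?_ (funext fun i => ?_))
  · have := congrFun h 0
    exact OnePoint.coe_eq_coe.1 ((tr_zero x).symm.trans (this.trans (tr_zero y)))
  · show ed x i = ed y i
    rw [ed_eq, ed_eq]
    exact congrArg _ (congrFun h (i + 1))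

theorem t2_BPath [T2Space V] [T2Space E] [LocallyCompactSpace V] [LocallyCompactSpace E]
    (hr : Continuous r) (hs : Continuous s) : T2Space (BPath r s) := by
  have := t2_PathN (r := r) (s := s)
  have := lc_PathN (r := r) (s := s) hr hs
  exact T2Space.of_injective_continuous Psi_injective inducing_Psi.continuous

theorem sc_BPath [T2Space V] [T2Space E] [LocallyCompactSpace V] [LocallyCompactSpace E]
    [SecondCountableTopology V] [SecondCountableTopology E]
    (hr : Continuous r) (hs : Continuous s) : SecondCountableTopology (BPath r s) := by
  have := t2_PathN (r := r) (s := s)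
  have := lc_PathN (r := r) (s := s) hr hs
  have := sc_PathN (r := r) (s := s)
  have := fun n => secondCountable_onePoint (PathN r s n)
  exact inducing_Psi.secondCountableTopology

theorem continuous_brng : Continuous (brng r s) := by
  refine continuous_def.2 fun U hU => ?_
  convert isOpen_ZSet_coord (r := r) (s := s) 0 U hU using 1
  ext x
  rw [mem_preimage, mem_preimage, tr_zero]
  exact (OnePoint.coe_injective.mem_set_image).symm

theorem isOpen_ed_mem (n : ℕ) (U : Set E) (hU : IsOpen U) :
    IsOpen {x : BPath r s | ed x n ∈ ((↑) '' U : Set (OnePoint E))} := by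
  convert isOpen_ZSet_coord (r := r) (s := s) (n + 1) (lastE ⁻¹' U)
    (hU.preimage (continuous_edge _)) using 1
  ext x
  rw [mem_ofPred_eq, mem_preimage, ed_eq]
  induction tr (n + 1) x using OnePoint.rec with
  | infty => simp
  | coe p => simp

end Topo

/-! ### Properness of the range map -/

section Compactness
variable [TopologicalSpace V] [TopologicalSpace E]

/-- Truncations of the same boundary path are compatible. -/
theorem tr_trunc (n : ℕ) (x : BPath r s) (p : PathN r s (n + 1))
    (h : tr (n + 1) x = (p : OnePoint _)) :
    tr n x = ((truncFin r s (Nat.le_succ n) p : PathN r s n) : OnePoint _) := by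
  have h' := (tr_succ_iff n x p).1 h
  cases n with
  | zero =>
    exact (tr_zero x).trans (congrArg (fun v : V => OnePoint.some (X := PathN r s 0) v)
      (ed_zero_r x _ (h' 0)).symm)
  | succ n => exact (tr_succ_iff n x _).2 fun i => h' (Fin.castLE (Nat.le_succ _) i)

/-- A quantity that is a continuous function of the `n`-th truncation, wherever this truncation
exists, converges along a filter whose `n`-th truncations converge to an honest path. -/
theorem tendsto_of_tr {Y : Type*} [TopologicalSpace Y] {l : Filter (BPath r s)} {n : ℕ}
    {p : PathN r s n} (hp : Tendsto (tr n) l (𝓝 (p : OnePoint (PathN r s n))))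
    {g : PathN r s n → Y} (hg : Continuous g) {h : BPath r s → Y}
    (hh : ∀ x (p' : PathN r s n), tr n x = (p' : OnePoint _) → h x = g p') :
    Tendsto h l (𝓝 (g p)) := by
  intro W hW
  have h1 := hp (isOpenEmbedding_coe.image_mem_nhds.2 (hg.continuousAt hW))
  show h ⁻¹' W ∈ l
  refine mem_of_superset (mem_map.1 h1) ?_
  rintro x ⟨p', hp', hx⟩
  rw [mem_preimage, hh x p' hx.symm]
  exact hp'

/-- Paths all of whose edges lie in prescribed compact sets form a compact set. -/
theorem isCompact_edges [T2Space V] (hr : Continuous r) (hs : Continuous s) (n : ℕ)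
    (C : Fin (n + 1) → Set E) (hC : ∀ i, IsCompact (C i)) :
    IsCompact {q : PathN r s (n + 1) | ∀ i, q.1 i ∈ C i} := by
  have := (isClosed_comp hr hs (n + 1)).isClosedEmbedding_subtypeVal.isCompact_preimage
    (isCompact_univ_pi hC)
  have e : {q : {a : Fin (n + 1) → E // Comp r s (n + 1) a} | ∀ i, q.1 i ∈ C i} =
      Subtype.val ⁻¹' (univ.pi C) :=
    Set.ext fun q => ⟨fun h i _ => h i, fun h i => h i trivial⟩
  exact e ▸ this

/-- The range map `∂E → E⁰` is proper. An ultrafilter whose ranges stay in a compact set has, for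
each `n`, a limit `ℓₙ` of its truncations in `Eⁿ ∪ {∞}`. These limits are the truncations of
a boundary path: if `ℓₙ` is a path with regular source, then almost all members of the ultrafilter
extend their `n`-th truncation by an edge from a fixed compact set, whence `ℓₙ₊₁ ≠ ∞`. -/
theorem isCompact_brng_preimage [T2Space V] [T2Space E] [LocallyCompactSpace V]
    [LocallyCompactSpace E] (hr : Continuous r) (hs : Continuous s) {K : Set V}
    (hK : IsCompact K) : IsCompact (brng r s ⁻¹' K) := by
  have := t2_PathN (r := r) (s := s)
  have := lc_PathN (r := r) (s := s) hr hs
  rw [isCompact_iff_ultrafilter_le_nhds]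
  intro 𝒰 h𝒰
  have hlim : ∀ n, ∃ l, Tendsto (tr n) (𝒰 : Filter (BPath r s)) (𝓝 l) := fun n =>
    ⟨_, (𝒰.map (tr n)).le_nhds_lim⟩
  choose ℓ hℓ using hlim
  obtain ⟨v, hvK, hv⟩ := hK.ultrafilter_le_nhds (𝒰.map (brng r s)) (by
    rw [Ultrafilter.coe_map, le_principal_iff, mem_map]
    exact le_principal_iff.1 h𝒰)
  replace hv : Tendsto (brng r s) (𝒰 : Filter (BPath r s)) (𝓝 v) := hv
  -- The candidate for the limit has range `v` and the last edges of the `ℓ (i + 1)` as its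
  -- edges.
  let a : ℕ → OnePoint E := fun i => (ℓ (i + 1)).map lastE
  have ha_coe : ∀ i (p : PathN r s (i + 1)), ℓ (i + 1) = (p : OnePoint _) →
      a i = ((p.1 (Fin.last i) : E) : OnePoint E) := fun i p h => by
    show (ℓ (i + 1)).map lastE = _
    rw [h]; rfl
  have ha_inf : ∀ i, a i = ∞ → ℓ (i + 1) = ∞ := fun i h => by
    rcases hl : ℓ (i + 1) with _ | p
    · rfl
    · have := ha_coe i p hl
      rw [h] at this
      simp at this
  have ha_ex : ∀ i (e : E), a i = (e : OnePoint E) →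
      ∃ p : PathN r s (i + 1), ℓ (i + 1) = (p : OnePoint _) ∧ p.1 (Fin.last i) = e := by
    intro i e h
    rcases hl : ℓ (i + 1) with _ | p
    · have : a i = ∞ := by
        show (ℓ (i + 1)).map lastE = _
        rw [hl]; rfl
      rw [h] at this
      simp at this
    · exact ⟨p, rfl, OnePoint.coe_eq_coe.1 ((ha_coe i p hl).symm.trans h)⟩
  have htr : ∀ n (p : PathN r s (n + 1)), ℓ (n + 1) = (p : OnePoint _) →
      ℓ n = ((truncFin r s (Nat.le_succ n) p : PathN r s n) : OnePoint _) := fun n p h =>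
    tendsto_nhds_unique (hℓ n) (tendsto_of_tr (h ▸ hℓ (n + 1))
      (continuous_coe.comp (continuous_truncFin_succ hr n)) fun x p' hx => tr_trunc n x p' hx)
  have hed : ∀ n (p : PathN r s (n + 1)), ℓ (n + 1) = (p : OnePoint _) → ∀ i : Fin (n + 1),
      Tendsto (fun x : BPath r s => ed x i) (𝒰 : Filter (BPath r s))
        (𝓝 ((p.1 i : E) : OnePoint E)) := fun n p h i =>
    tendsto_of_tr (h ▸ hℓ (n + 1)) (continuous_coe.comp (continuous_edge i))
      fun x p' hx => (tr_succ_iff n x p').1 hx i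
  have hrange : ∀ n (p : PathN r s (n + 1)), ℓ (n + 1) = (p : OnePoint _) → r (p.1 0) = v :=
    fun n p h => tendsto_nhds_unique
      (tendsto_of_tr (g := fun p : PathN r s (n + 1) => r (p.1 0)) (h ▸ hℓ (n + 1))
        (hr.comp (continuous_edge 0))
        fun x p' hx => (ed_zero_r x _ ((tr_succ_iff n x p').1 hx 0)).symm) hv
  have hinf : ∀ i, a i = ∞ → a (i + 1) = ∞ := fun i h => by
    by_contra hne
    obtain ⟨e, he⟩ := OnePoint.ne_infty_iff_exists.1 hne
    obtain ⟨p, hp, -⟩ := ha_ex (i + 1) e he.symm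
    have := htr _ p hp
    rw [ha_inf i h] at this
    simp at this
  have hgood : Good r s (v, a) := by
    refine ⟨hinf, ?_, ?_, ?_, ?_⟩
    · intro e he
      obtain ⟨p, hp, rfl⟩ := ha_ex 0 e he
      exact hrange 0 p hp
    · intro i e e' he he'
      obtain ⟨p, hp, rfl⟩ := ha_ex (i + 1) e' he'
      have h1 := (ha_coe i _ (htr _ p hp)).symm.trans he
      rw [← OnePoint.coe_eq_coe.1 h1]
      exact p.2 _ _ (by simp)
    · -- If `v` had a regular neighbourhood `U`, then almost all members of the ultrafilter would
      -- have a first edge in the compact set `r⁻¹(cl U)`, and these edges could not tend to `∞`.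
      rintro h0 ⟨U, hU, hvU, hcU, hrU, hUU⟩
      have hcpt := isCompact_edges (r := r) hr hs 0 (fun _ => r ⁻¹' closure U) fun _ => hrU
      have h1 := hℓ 1
      rw [ha_inf 0 h0] at h1
      have e1 := h1 ((isOpen_compl_image_coe.2 ⟨hcpt.isClosed, hcpt⟩).mem_nhds (by simp))
      have e2 := hv (hU.mem_nhds hvU)
      obtain ⟨x, hx1, hx2⟩ := 𝒰.nonempty_of_mem (inter_mem e1 e2)
      by_cases hx : ed x 0 = ∞
      · exact ed_zero_sing x hx ⟨U, hU, hx2, hcU, hrU, hUU⟩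
      · obtain ⟨p, hp⟩ := exists_tr_succ x 0 hx
        refine hx1 ⟨p, fun i => ?_, hp.symm⟩
        obtain rfl : i = 0 := Fin.ext (by omega)
        have := ed_zero_r x _ ((tr_succ_iff 0 x p).1 hp 0)
        rw [mem_preimage, this]
        exact subset_closure hx2
    · -- The same argument, applied to the source of the `i`-th edge; the earlier edges stay in
      -- compact neighbourhoods of the edges of the limit.
      rintro i e he hi ⟨U, hU, heU, hcU, hrU, hUU⟩
      obtain ⟨p, hp, rfl⟩ := ha_ex i e he
      choose C hCc hCn using fun j => exists_compact_mem_nhds (p.1 j)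
      let C' : Fin (i + 2) → Set E := fun j =>
        if h : (j : ℕ) < i + 1 then C ⟨j, h⟩ else r ⁻¹' closure U
      have hcpt := isCompact_edges (r := r) hr hs (i + 1) C' fun j => by
        by_cases h : (j : ℕ) < i + 1
        · simp only [C', h, dite_true]; exact hCc _
        · simp only [C', h, dite_false]; exact hrU
      have h1 := hℓ (i + 2)
      rw [ha_inf (i + 1) hi] at h1
      have e1 := h1 ((isOpen_compl_image_coe.2 ⟨hcpt.isClosed, hcpt⟩).mem_nhds (by simp))
      have e2 := hed i p hp (Fin.last i)
        (isOpenEmbedding_coe.image_mem_nhds.2 ((hU.preimage hs).mem_nhds heU))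
      have e3 : ∀ j, _ := fun j => hed i p hp j (isOpenEmbedding_coe.image_mem_nhds.2 (hCn j))
      have e3' := (iInter_mem (f := (𝒰 : Filter (BPath r s)))).2 e3
      obtain ⟨x, ⟨hx1, ⟨e', heU', hx2⟩⟩, hx3⟩ := 𝒰.nonempty_of_mem (inter_mem (inter_mem e1 e2) e3')
      rw [Fin.val_last] at hx2
      by_cases hx : ed x (i + 1) = ∞
      · exact ed_succ_sing x i e' hx2.symm hx ⟨U, hU, heU', hcU, hrU, hUU⟩
      · obtain ⟨q, hq⟩ := exists_tr_succ x (i + 1) hx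
        have hq' := (tr_succ_iff _ x q).1 hq
        refine hx1 ⟨q, fun j => ?_, hq.symm⟩
        by_cases h : (j : ℕ) < i + 1
        · simp only [C', h, dite_true]
          obtain ⟨c, hc, hcx⟩ := mem_iInter.1 hx3 ⟨j, h⟩
          have := hcx.trans (hq' j)
          rw [← OnePoint.coe_eq_coe.1 this]
          exact hc
        · have hj : j = Fin.last (i + 1) := Fin.ext (by have := j.2; rw [Fin.val_last]; omega)
          simp only [C', h, dite_false]
          have h2 := hq' (Fin.last (i + 1))
          rw [Fin.val_last] at h2
          have h3 := ed_succ_r x i e' _ hx2.symm h2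
          rw [hj]
          show r (q.1 _) ∈ closure U
          rw [← h3]
          exact subset_closure heU'
  -- It remains to identify the truncations of the path `x` with these coordinates with the
  -- limits.
  obtain ⟨x, hx⟩ := exists_of_good hgood
  have hbx : brng r s x = v := congrArg Prod.fst hx
  have hex : ∀ i, ed x i = a i := congrFun (congrArg Prod.snd hx)
  refine ⟨x, ?_, ?_⟩
  · rw [mem_preimage, hbx]; exact hvK
  rw [inducing_Psi.nhds_eq_comap, ← tendsto_iff_comap]
  refine tendsto_pi_nhds.2 fun n => ?_
  suffices h : tr n x = ℓ n by
    show Tendsto (tr n) _ (𝓝 (tr n x))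
    rw [h]
    exact hℓ n
  cases n with
  | zero =>
    refine tendsto_nhds_unique (f := tr (r := r) (s := s) 0)
      (l := (𝒰 : Filter (BPath r s))) ?_ (hℓ 0)
    have h0 : Tendsto (tr (r := r) (s := s) 0) (𝒰 : Filter (BPath r s))
        (𝓝 (OnePoint.some (X := PathN r s 0) v)) :=
      (Tendsto.comp (g := OnePoint.some (X := PathN r s 0)) (y := 𝓝 (v : PathN r s 0))
        (continuous_coe.tendsto (X := PathN r s 0) v) hv).congr fun y => (tr_zero y).symm
    have h1 : tr 0 x = OnePoint.some (X := PathN r s 0) v :=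
      (tr_zero x).trans (congrArg (fun v : V => OnePoint.some (X := PathN r s 0) v) hbx)
    exact h1 ▸ h0
  | succ n =>
    rcases hl : ℓ (n + 1) with _ | p
    · have h1 : ed x n = ∞ := by
        rw [hex]
        show (ℓ (n + 1)).map lastE = _
        rw [hl]; rfl
      rw [ed_eq] at h1
      rcases ht : tr (n + 1) x with _ | q
      · rfl
      · rw [ht] at h1
        exact absurd h1 (OnePoint.coe_ne_infty _)
    · refine (tr_succ_iff n x p).2 fun i => ?_
      rw [hex]
      have hle : ∀ k, a i = ∞ → a (i + k) = ∞ := by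
        intro k hk
        induction k with
        | zero => exact hk
        | succ k ih => exact hinf _ ih
      have hne : a i ≠ ∞ := fun h => by
        have := hle (n - i) h
        rw [show (i : ℕ) + (n - i) = n by omega, ha_coe n p hl] at this
        simp at this
      obtain ⟨e, he⟩ := OnePoint.ne_infty_iff_exists.1 hne
      obtain ⟨q, hq, rfl⟩ := ha_ex i e he.symm
      rw [← he]
      have h1 := hed i q hq (Fin.last i)
      rw [Fin.val_last] at h1
      exact tendsto_nhds_unique h1 (hed n p hl i)

/-- Preimages of compact neighbourhoods under the range map are compact neighbourhoods in `∂E`. -/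
theorem lc_BPath [T2Space V] [T2Space E] [LocallyCompactSpace V] [LocallyCompactSpace E]
    (hr : Continuous r) (hs : Continuous s) : LocallyCompactSpace (BPath r s) := by
  have := t2_BPath hr hs
  have : WeaklyLocallyCompactSpace (BPath r s) := ⟨fun x => by
    obtain ⟨K, hK, hx⟩ := exists_compact_mem_nhds (brng r s x)
    exact ⟨_, isCompact_brng_preimage hr hs hK, continuous_brng.continuousAt hx⟩⟩
  infer_instance

end Compactness

/-! ### The Borel structure and the shift -/

section Borel
variable [TopologicalSpace V] [TopologicalSpace E]

/-- Functions defined by distinguishing the cases `g z = ∞` and `g z = e ∈ E` are measurable. -/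
theorem measurable_elim [MeasurableSpace E] [BorelSpace E] {Z Y : Type*} [MeasurableSpace Z]
    [MeasurableSpace Y]
    {g : Z → OnePoint E} (hg : Measurable g) {a : Z → Y} (ha : Measurable a)
    {f : E → Z → Y} (hf : Measurable fun p : Z × E => f p.2 p.1) :
    Measurable fun z => (g z).elim (a z) (f · z) := by
  intro B hB
  have hm : MeasurableEmbedding ((↑) : E → OnePoint E) := isOpenEmbedding_coe.measurableEmbedding
  have e : (fun z => (g z).elim (a z) (f · z)) ⁻¹' B =
      (fun z => (z, g z)) ⁻¹' (Prod.map id ((↑) : E → OnePoint E) ''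
        ((fun p : Z × E => f p.2 p.1) ⁻¹' B)) ∪
          ((g ⁻¹' range ((↑) : E → OnePoint E))ᶜ ∩ a ⁻¹' B) := by
    ext z
    simp only [mem_preimage, mem_union, mem_inter_iff, mem_compl_iff, mem_image, Prod.exists,
      Prod.map_apply, id, Prod.mk.injEq]
    induction g z using OnePoint.rec with
    | infty => simp
    | coe e => simp
  rw [e]
  exact (((MeasurableEmbedding.id.prodMap hm).measurableSet_image.2 (hf hB)).preimage
    (measurable_id.prodMk hg)).union (((hm.measurableSet_range).preimage hg).compl.inter (ha hB))

instance instBorelBPath : BorelSpace (BPath r s) := ⟨rfl⟩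

variable [T2Space V] [T2Space E] [LocallyCompactSpace V] [LocallyCompactSpace E]
  [SecondCountableTopology V] [SecondCountableTopology E]

theorem polish_BPath (hr : Continuous r) (hs : Continuous s) : PolishSpace (BPath r s) := by
  have := t2_BPath hr hs
  have := sc_BPath hr hs
  have := lc_BPath hr hs
  exact polish_of_lcsc _

theorem measurable_ed (n : ℕ) : Measurable fun x : BPath r s => ed x n :=
  letI := borel E
  haveI : BorelSpace E := ⟨rfl⟩
  measurable_to_onePoint _ fun U hU => (isOpen_ed_mem n U hU).measurableSet

variable [MeasurableSpace V] [BorelSpace V] [MeasurableSpace E] [BorelSpace E]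

theorem measurable_brng : Measurable (brng r s) := continuous_brng.measurable

theorem measurable_Phi : Measurable (Phi : BPath r s → _) :=
  measurable_brng.prodMk (measurable_pi_iff.2 measurable_ed)

/-- By the Lusin–Souslin theorem, the Borel structure of `∂E` is the one of the space of
coordinates. -/
theorem measurableEmbedding_Phi (hr : Continuous r) (hs : Continuous s) :
    MeasurableEmbedding (Phi : BPath r s → _) := by
  have := polish_BPath hr hs
  have := polish_of_lcsc V
  have := polish_onePoint E
  exact measurable_Phi.measurableEmbedding Phi_injective

theorem brng_sh (x : BPath r s) : brng r s (sh x) = (ed x 0).elim (brng r s x) s := by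
  rcases h : ed x 0 with _ | e
  · exact brng_sh_infty x h
  · exact brng_sh_coe x e h

theorem measurable_sh (hr : Continuous r) (hs : Continuous s) :
    Measurable (sh : BPath r s → BPath r s) := by
  rw [← (measurableEmbedding_Phi hr hs).measurable_comp_iff]
  refine Measurable.prodMk ?_ (measurable_pi_iff.2 fun i => ?_)
  · simp only [brng_sh]
    exact measurable_elim (measurable_ed 0) measurable_brng (hs.measurable.comp measurable_snd)
  · simp only [ed_sh]
    exact measurable_ed (i + 1)

/-- The boundary paths whose first edge exists and lies in `W`. -/
def fst0 (r s : E → V) (W : Set E) : Set (BPath r s) := {x | ed x 0 ∈ ((↑) '' W : Set (OnePoint E))}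

theorem measurableSet_fst0 {W : Set E} (hW : MeasurableSet W) : MeasurableSet (fst0 r s W) :=
  (isOpenEmbedding_coe.measurableEmbedding.measurableSet_image.2 hW).preimage (measurable_ed 0)

theorem injOn_sh {W : Set E} (hW : InjOn s W) : InjOn (sh : BPath r s → _) (fst0 r s W) := by
  rintro x ⟨e, he, hx⟩ y ⟨e', he', hy⟩ hxy
  have h1 := brng_sh_coe x e hx.symm
  have h2 := brng_sh_coe y e' hy.symm
  have : e = e' := hW he he' (by rw [← h1, ← h2, hxy])
  subst this
  exact eq_of_ed_sh hx.symm hy.symm hxy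

/-- The shift maps the paths that start with an edge in `B` and continue in `A` onto the paths in
`A` whose range lies in `s(B)`. -/
theorem sh_image_fst0 {B : Set E} (A : Set (BPath r s)) :
    sh '' (fst0 r s B ∩ sh ⁻¹' A) = A ∩ brng r s ⁻¹' (s '' B) := by
  ext y
  constructor
  · rintro ⟨x, ⟨⟨e, he, hx⟩, hA⟩, rfl⟩
    exact ⟨hA, e, he, (brng_sh_coe x e hx.symm).symm⟩
  · rintro ⟨hA, e, he, hy⟩
    obtain ⟨x, hx, rfl⟩ := exists_cons e y hy
    exact ⟨x, ⟨⟨e, he, hx.symm⟩, hA⟩, rfl⟩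

/-- Lusin–Souslin: the shift is injective on paths whose first edge lies in a set on which `s` is.
-/
theorem measurableSet_sh_image (hr : Continuous r) (hs : Continuous s) {W : Set E} (hW : InjOn s W)
    {B : Set (BPath r s)} (hB : MeasurableSet B) (hBW : B ⊆ fst0 r s W) :
    MeasurableSet (sh '' B) := by
  have := polish_BPath hr hs
  exact hB.image_of_measurable_injOn (measurable_sh hr hs) ((injOn_sh hW).mono hBW)

theorem measurableSet_s_image (hs : Continuous s) {W : Set E} (hW : InjOn s W)
    {B : Set E} (hB : MeasurableSet B) (hBW : B ⊆ W) :
    MeasurableSet (s '' B) := by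
  have := polish_of_lcsc E
  have := polish_of_lcsc V
  exact hB.image_of_measurable_injOn hs.measurable (hW.mono hBW)

theorem isOpen_fst0 {W : Set E} (hW : IsOpen W) : IsOpen (fst0 r s W) := isOpen_ed_mem 0 W hW

theorem fst0_disjoint (W : Set E) : Disjoint (fst0 r s W) (VtxSet r s) := by
  rw [Set.disjoint_left]
  rintro x ⟨e, -, he⟩ hx
  rw [mem_VtxSet_iff, ← he] at hx
  exact OnePoint.coe_ne_infty _ hx

/-- `E` is covered by countably many open sets on which `s` is injective; a
disjoint Borel refinement of such a cover. -/
theorem exists_cover (hs : IsLocalHomeomorph s) : ∃ D W : ℕ → Set E,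
    (∀ n, MeasurableSet (D n)) ∧ (∀ n, D n ⊆ W n) ∧ Pairwise (Function.onFun Disjoint D) ∧
    (⋃ n, D n) = univ ∧ (∀ n, IsOpen (W n)) ∧ ∀ n, InjOn s (W n) := by
  choose W hW1 hW2 hW3 using fun e : E => (show ∃ W : Set E, IsOpen W ∧ e ∈ W ∧ InjOn s W by
    obtain ⟨f, hf, rfl⟩ := hs e
    exact ⟨f.source, f.open_source, hf, f.injOn⟩)
  obtain ⟨t, htc, ht⟩ := TopologicalSpace.isOpen_iUnion_countable W hW1
  have hU : (⋃ e ∈ t, W e) = univ := by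
    rw [ht]; exact eq_univ_of_forall fun e => mem_iUnion.2 ⟨e, hW2 e⟩
  obtain ⟨W', hW'⟩ : ∃ W' : ℕ → Set E, (∀ n, IsOpen (W' n)) ∧ (∀ n, InjOn s (W' n)) ∧
      (⋃ n, W' n) = univ := by
    rcases t.eq_empty_or_nonempty with rfl | hne
    · refine ⟨fun _ => ∅, fun _ => isOpen_empty, fun _ => injOn_empty _, ?_⟩
      simpa using hU
    · obtain ⟨f, rfl⟩ := htc.exists_eq_range hne
      refine ⟨fun n => W (f n), fun n => hW1 _, fun n => hW3 _, ?_⟩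
      rw [biUnion_range] at hU
      exact hU
  exact ⟨disjointed W', W', fun n => MeasurableSet.disjointed (fun n => (hW'.1 n).measurableSet) n,
    disjointed_subset W', disjoint_disjointed W', (iUnion_disjointed).trans hW'.2.2, hW'.1, hW'.2.1⟩

end Borel

/-! ### The range of a quasi-invariant measure -/

section Forward
variable [TopologicalSpace V] [TopologicalSpace E]
variable [T2Space V] [T2Space E] [LocallyCompactSpace V] [LocallyCompactSpace E]
  [SecondCountableTopology V] [SecondCountableTopology E]
variable [MeasurableSpace V] [BorelSpace V] [MeasurableSpace E] [BorelSpace E]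

theorem exp_mul_exp_neg (β : ℝ) :
    ENNReal.ofReal (Real.exp β) * ENNReal.ofReal (Real.exp (-β)) = 1 := by
  rw [← ENNReal.ofReal_mul (Real.exp_nonneg _), ← Real.exp_add]
  simp

/-- Quasi-invariance, applied to paths whose first edge lies in an open set on which `s` is
injective. -/
theorem QuasiInv.apply {β : ℝ} {ν : Measure (BPath r s)} (h : QuasiInv r s β ν) {W : Set E}
    (hW : IsOpen W) (hWs : InjOn s W) {B : Set (BPath r s)} (hB : B ⊆ fst0 r s W)
    (hBm : MeasurableSet B) :
    ν B = ENNReal.ofReal (Real.exp (-β)) * ν (sh '' B) := by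
  have := h _ (isOpen_fst0 hW) (fst0_disjoint W)
    (fun x hx y hy hxy => injOn_sh hWs hx hy (Subtype.ext hxy)) B hB hBm
  rwa [quasi_image] at this

/-- Quasi-invariance only has to be checked on paths whose first edge lies in a set on which `s`
is injective. -/
theorem quasiInv_of (hr : Continuous r) (hs : IsLocalHomeomorph s) {β : ℝ}
    {ν : Measure (BPath r s)}
    (h : ∀ W : Set E, IsOpen W → InjOn s W → ∀ B : Set (BPath r s), B ⊆ fst0 r s W →
      MeasurableSet B → ν B = ENNReal.ofReal (Real.exp (-β)) * ν (sh '' B)) :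
    QuasiInv r s β ν := by
  intro U hU hUV hinj B hBU hB
  rw [quasi_image]
  -- The set `B` is cut into pieces according to the first edge.
  obtain ⟨D, W, hD, hDW, hdisj, hcov, hWo, hWi⟩ := exists_cover (s := s) hs
  have hsh : InjOn (sh : BPath r s → _) U := fun x hx y hy hxy =>
    hinj hx hy (congrArg Subtype.val hxy)
  have hBD : ∀ n, MeasurableSet (B ∩ fst0 r s (D n)) := fun n =>
    hB.inter (measurableSet_fst0 (hD n))
  have hsub : ∀ n, B ∩ fst0 r s (D n) ⊆ fst0 r s (W n) := fun n x hx =>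
    image_mono (hDW n) hx.2
  have hdis : Pairwise (Function.onFun Disjoint fun n => B ∩ fst0 r s (D n)) := by
    intro i j hij
    rw [Function.onFun, Set.disjoint_left]
    rintro x ⟨-, e, he, hx⟩ ⟨-, e', he', hx'⟩
    rw [← hx, OnePoint.coe_eq_coe] at hx'
    exact Set.disjoint_left.1 (hdisj hij) he (hx' ▸ he')
  have hun : B = ⋃ n, B ∩ fst0 r s (D n) := by
    rw [← inter_iUnion]
    refine (inter_eq_left.2 fun x hx => ?_).symm
    have hx0 : ed x 0 ≠ ∞ := fun h0 =>
      Set.disjoint_left.1 hUV (hBU hx) ((mem_VtxSet_iff x).2 h0)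
    obtain ⟨e, he⟩ := OnePoint.ne_infty_iff_exists.1 hx0
    obtain ⟨n, hn⟩ := mem_iUnion.1 (hcov.ge (mem_univ e))
    exact mem_iUnion.2 ⟨n, e, hn, he⟩
  have e1 : ν B = ∑' n, ν (B ∩ fst0 r s (D n)) := by
    conv_lhs => rw [hun]
    exact measure_iUnion hdis hBD
  have e2 : ν (sh '' B) = ∑' n, ν (sh '' (B ∩ fst0 r s (D n))) := by
    conv_lhs => rw [hun, image_iUnion]
    refine measure_iUnion (fun i j hij => ?_) fun n =>
      measurableSet_sh_image hr hs.continuous (hWi n) (hBD n) (hsub n)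
    rw [Function.onFun, Set.disjoint_left]
    rintro _ ⟨x, hx, rfl⟩ ⟨y, hy, hxy⟩
    have := hsh (hBU hy.1) (hBU hx.1) hxy
    exact Set.disjoint_left.1 (hdis hij) hx (this ▸ hy)
  rw [e1, e2, ← ENNReal.tsum_mul_left]
  exact tsum_congr fun n => h _ (hWo n) (hWi n) _ (hsub n) (hBD n)

/-- The push-forward of a regular measure along the (proper) range map is regular. -/
theorem regular_map_brng (hr : Continuous r) (hs : Continuous s) (ν : Measure (BPath r s))
    [ν.Regular] : (Measure.map (brng r s) ν).Regular := by
  refine regular_of_locallyFinite _ ⟨fun v => ?_⟩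
  obtain ⟨K, hK, hv⟩ := exists_compact_mem_nhds v
  refine ⟨K, hv, ?_⟩
  rw [Measure.map_apply measurable_brng hK.measurableSet]
  exact (isCompact_brng_preimage hr hs hK).measure_lt_top

/-- A pullback of a regular measure along a local homeomorphism is regular. -/
theorem regular_of_isPullback (hs : IsLocalHomeomorph s) {μ : Measure V} [μ.Regular]
    {sμ : Measure E} (h : IsPullback s sμ μ) : sμ.Regular := by
  refine regular_of_locallyFinite _ ⟨fun e => ?_⟩
  obtain ⟨K, hK, hv⟩ := exists_compact_mem_nhds (s e)
  obtain ⟨f, hf, rfl⟩ := hs e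
  have ho : IsOpen (f.source ∩ f ⁻¹' interior K) :=
    f.open_source.inter (isOpen_interior.preimage hs.continuous)
  refine ⟨_, ho.mem_nhds ⟨hf, mem_interior_iff_mem_nhds.2 hv⟩, ?_⟩
  rw [h _ ho (f.injOn.mono inter_subset_left) _ Subset.rfl ho.measurableSet]
  refine lt_of_le_of_lt (measure_mono ?_) hK.measure_lt_top
  rintro _ ⟨x, hx, rfl⟩
  exact interior_subset hx.2

/-- The range of a quasi-invariant measure is sub-invariant: its pullback to `E` is `e^β` times
the law of the first edge. -/
theorem subInv_map (hr : Continuous r) (hs : IsLocalHomeomorph s) {β : ℝ}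
    {ν : Measure (BPath r s)} (hν : ν.Regular) (h : QuasiInv r s β ν) :
    SubInv r s β (Measure.map (brng r s) ν) := by
  have hreg := regular_map_brng hr hs.continuous ν
  have hem : MeasurableEmbedding ((↑) : E → OnePoint E) := isOpenEmbedding_coe.measurableEmbedding
  -- By quasi-invariance, `s*(r_*ν)` has to be `e^β` times the law of the first edge.
  let sμ : Measure E := ENNReal.ofReal (Real.exp β) •
    (Measure.map (fun x : BPath r s => ed x 0) ν).comap ((↑) : E → OnePoint E)
  have hsμ : ∀ B : Set E, MeasurableSet B →
      sμ B = ENNReal.ofReal (Real.exp β) * ν (fst0 r s B) := fun B hB => by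
    rw [Measure.smul_apply, hem.comap_apply,
      Measure.map_apply (measurable_ed 0) (hem.measurableSet_image.2 hB)]
    rfl
  have hpb : IsPullback s sμ (Measure.map (brng r s) ν) := by
    intro U hU hUs B hBU hB
    have hi : sh '' fst0 r s B = brng r s ⁻¹' (s '' B) := by
      simpa using sh_image_fst0 (r := r) (B := B) univ
    rw [hsμ B hB, h.apply hU hUs (B := fst0 r s B) (fun x hx => image_mono hBU hx)
        (measurableSet_fst0 hB),
      ← mul_assoc, exp_mul_exp_neg, one_mul, hi,
      Measure.map_apply measurable_brng (measurableSet_s_image hs.continuous hUs hB hBU)]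
  -- Among paths with range in `B`, those of positive length have a first edge in `r⁻¹(B)`.
  have hfst : ∀ B : Set V, fst0 r s (r ⁻¹' B) = brng r s ⁻¹' B ∩ {x | ed x 0 ≠ ∞} := by
    intro B
    refine Set.ext fun x => ⟨?_, ?_⟩
    · rintro ⟨e, he, hx⟩
      refine ⟨?_, fun h0 => OnePoint.coe_ne_infty e (hx.trans h0)⟩
      rw [mem_preimage, ← ed_zero_r x e hx.symm]
      exact he
    · rintro ⟨hx, hx0⟩
      obtain ⟨e, he⟩ := OnePoint.ne_infty_iff_exists.1 hx0
      refine ⟨e, ?_, he⟩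
      rw [mem_preimage, ed_zero_r x e he.symm]
      exact hx
  refine ⟨hreg, sμ, regular_of_isPullback hs hpb, hpb, Measure.le_iff.2 fun B hB => ?_,
    fun B hB hBr => ?_⟩
  · rw [Measure.map_apply hr.measurable hB, hsμ _ (hr.measurable hB), Measure.smul_apply,
      Measure.map_apply measurable_brng hB, hfst, smul_eq_mul]
    gcongr
    exact inter_subset_left
  · rw [Measure.map_apply hr.measurable hB, hsμ _ (hr.measurable hB),
      Measure.map_apply measurable_brng hB, hfst, inter_eq_left.2]
    intro x hx h0
    exact ed_zero_sing x h0 (hBr _ hx)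

end Forward

/-! ### A quasi-invariant measure is determined by its range -/

section Injectivity
variable [TopologicalSpace V] [TopologicalSpace E]

/-- Borel cylinder sets: conditions on the range and on finitely many edges, where each edge
ranges over a Borel set contained in an open set on which `s` is injective. -/
inductive Cyl (r s : E → V) [MeasurableSpace V] [MeasurableSpace E] : Set (BPath r s) → Prop
  | base (B : Set V) (hB : MeasurableSet B) : Cyl r s (brng r s ⁻¹' B)
  | cons (W B : Set E) (A : Set (BPath r s)) (hW : IsOpen W) (hWs : InjOn s W) (hBW : B ⊆ W)
      (hB : MeasurableSet B) (hA : Cyl r s A) : Cyl r s (fst0 r s B ∩ sh ⁻¹' A)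

theorem fst0_inter_rng (B : Set E) (C : Set V) :
    fst0 r s B ∩ brng r s ⁻¹' C = fst0 r s (B ∩ r ⁻¹' C) := by
  refine Set.ext fun x => ⟨?_, ?_⟩
  · rintro ⟨⟨e, he, hx⟩, hC⟩
    refine ⟨e, ⟨he, ?_⟩, hx⟩
    rw [mem_preimage, ed_zero_r x e hx.symm]
    exact hC
  · rintro ⟨e, ⟨he, hC⟩, hx⟩
    refine ⟨⟨e, he, hx⟩, ?_⟩
    rw [mem_preimage, ← ed_zero_r x e hx.symm]
    exact hC

theorem fst0_inter (B C : Set E) : fst0 r s B ∩ fst0 r s C = fst0 r s (B ∩ C) := by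
  refine Set.ext fun x => ⟨?_, ?_⟩
  · rintro ⟨⟨e, he, hx⟩, ⟨e', he', hx'⟩⟩
    have : e' = e := OnePoint.coe_eq_coe.1 (hx'.trans hx.symm)
    exact ⟨e, ⟨he, this ▸ he'⟩, hx⟩
  · rintro ⟨e, ⟨he, he'⟩, hx⟩
    exact ⟨⟨e, he, hx⟩, ⟨e, he', hx⟩⟩

variable [T2Space V] [T2Space E] [LocallyCompactSpace V] [LocallyCompactSpace E]
  [SecondCountableTopology V] [SecondCountableTopology E]
variable [MeasurableSpace V] [BorelSpace V] [MeasurableSpace E] [BorelSpace E]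

theorem Cyl.inter_rng (hr : Continuous r) {A : Set (BPath r s)} (hA : Cyl r s A) {C : Set V}
    (hC : MeasurableSet C) : Cyl r s (A ∩ brng r s ⁻¹' C) := by
  cases hA with
  | base B hB => exact Cyl.base (B ∩ C) (hB.inter hC)
  | cons W B A hW hWs hBW hB hA =>
    rw [inter_right_comm, fst0_inter_rng]
    exact Cyl.cons W _ A hW hWs (inter_subset_left.trans hBW) (hB.inter (hr.measurable hC)) hA

theorem Cyl.inter (hr : Continuous r) {A A' : Set (BPath r s)} (hA : Cyl r s A)
    (hA' : Cyl r s A') : Cyl r s (A ∩ A') := by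
  induction hA generalizing A' with
  | base B hB =>
    rw [inter_comm]
    exact hA'.inter_rng hr hB
  | cons W B A hW hWs hBW hB hA ih =>
    cases hA' with
    | base C hC => exact (Cyl.cons W B A hW hWs hBW hB hA).inter_rng hr hC
    | cons W' B' A' hW' hWs' hBW' hB' hA' =>
      rw [inter_inter_inter_comm, fst0_inter, ← preimage_inter]
      exact Cyl.cons W _ _ hW hWs (inter_subset_left.trans hBW) (hB.inter hB') (ih hA')

theorem Cyl.measurableSet (hr : Continuous r) (hs : Continuous s) {A : Set (BPath r s)}
    (hA : Cyl r s A) : MeasurableSet A := by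
  induction hA with
  | base B hB => exact measurable_brng hB
  | cons W B A hW hWs hBW hB hA ih =>
    exact (measurableSet_fst0 hB).inter (measurable_sh hr hs ih)

/-- A quasi-invariant measure is determined on cylinders by its range: removing the first edge
multiplies the measure by `e^β`. -/
theorem Cyl.measure_eq (hr : Continuous r) (hs : Continuous s) {β : ℝ} {ν₁ ν₂ : Measure (BPath r s)}
    (h₁ : QuasiInv r s β ν₁) (h₂ : QuasiInv r s β ν₂)
    (h : Measure.map (brng r s) ν₁ = Measure.map (brng r s) ν₂) {A : Set (BPath r s)}
    (hA : Cyl r s A) : ν₁ A = ν₂ A := by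
  -- The induction needs a further condition on the range, since removing the first edge
  -- `e ∈ B` leaves the condition that the range lies in `s(B)`.
  suffices H : ∀ C : Set V, MeasurableSet C →
      ν₁ (A ∩ brng r s ⁻¹' C) = ν₂ (A ∩ brng r s ⁻¹' C) by
    simpa using H univ .univ
  induction hA with
  | base B hB =>
    intro C hC
    rw [← preimage_inter, ← Measure.map_apply measurable_brng (hB.inter hC), h,
      Measure.map_apply measurable_brng (hB.inter hC)]
  | cons W B A hW hWs hBW hB hA ih =>
    intro C hC
    have hB' : MeasurableSet (B ∩ r ⁻¹' C) := hB.inter (hr.measurable hC)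
    have hBW' : B ∩ r ⁻¹' C ⊆ W := inter_subset_left.trans hBW
    have hsub : fst0 r s (B ∩ r ⁻¹' C) ∩ sh ⁻¹' A ⊆ fst0 r s W :=
      fun x hx => image_mono hBW' hx.1
    have hm : MeasurableSet (fst0 r s (B ∩ r ⁻¹' C) ∩ sh ⁻¹' A) :=
      (measurableSet_fst0 hB').inter (measurable_sh hr hs (hA.measurableSet hr hs))
    rw [inter_right_comm, fst0_inter_rng, h₁.apply hW hWs hsub hm, h₂.apply hW hWs hsub hm,
      sh_image_fst0, ih _ (measurableSet_s_image hs hWs hB' hBW')]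

/-- The Borel cylinders generate the Borel sets of `∂E`: they generate the coordinates of `Phi`,
where the `i`-th edge is obtained by induction as the `(i - 1)`-st edge of the shift. -/
theorem borel_eq_generateFrom_cyl (hr : Continuous r) (hs : IsLocalHomeomorph s) :
    instMeasBPath r s = MeasurableSpace.generateFrom {A | Cyl r s A} := by
  refine le_antisymm ?_ (MeasurableSpace.generateFrom_le fun A hA =>
    Cyl.measurableSet hr hs.continuous hA)
  obtain ⟨D, W, hD, hDW, -, hcov, hWo, hWi⟩ := exists_cover (s := s) hs
  rw [← (measurableEmbedding_Phi hr hs.continuous).comap_eq, ← measurable_iff_comap_le]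
  let m := MeasurableSpace.generateFrom {A | Cyl r s A}
  -- Preimages under the shift of sets in the generated σ-algebra `m` belong to `m` away from
  -- `E⁰`.
  have hsh : ∀ A : Set (BPath r s), MeasurableSet[m] A → ∀ n,
      MeasurableSet[m] (fst0 r s (D n) ∩ sh ⁻¹' A) := by
    intro A hA n
    have hcyl : ∀ A : Set (BPath r s), Cyl r s A → MeasurableSet[m] (fst0 r s (D n) ∩ sh ⁻¹' A) :=
      fun A hA => MeasurableSpace.measurableSet_generateFrom
        (Cyl.cons (W n) _ A (hWo n) (hWi n) (hDW n) (hD n) hA)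
    induction A, hA using MeasurableSpace.generateFrom_induction with
    | hC A hA _ => exact hcyl A hA
    | empty => simp
    | compl A _ ih =>
      have h0 := hcyl _ (Cyl.base univ .univ)
      rw [preimage_univ, preimage_univ, inter_univ] at h0
      convert h0.diff ih using 1
      ext x
      simp only [preimage_compl, mem_inter_iff, mem_compl_iff, Set.mem_sdiff]
      tauto
    | iUnion f _ ih =>
      rw [preimage_iUnion, inter_iUnion]
      exact MeasurableSet.iUnion ih
  -- The coordinates are measurable with respect to `m`.
  have hed : ∀ i, ∀ B : Set E, MeasurableSet B →
      MeasurableSet[m] {x : BPath r s | ed x i ∈ ((↑) '' B : Set (OnePoint E))} := by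
    intro i
    induction i with
    | zero =>
      intro B hB
      have : {x : BPath r s | ed x 0 ∈ ((↑) '' B : Set (OnePoint E))} =
          ⋃ n, fst0 r s (B ∩ D n) ∩ sh ⁻¹' (brng r s ⁻¹' univ) := by
        refine Set.ext fun x => ?_
        simp only [preimage_univ, inter_univ, mem_iUnion]
        constructor
        · rintro ⟨e, he, hx⟩
          obtain ⟨n, hn⟩ := mem_iUnion.1 (hcov.ge (mem_univ e))
          exact ⟨n, e, ⟨he, hn⟩, hx⟩
        · rintro ⟨n, e, ⟨he, hn⟩, hx⟩
          exact ⟨e, he, hx⟩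
      rw [this]
      exact MeasurableSet.iUnion fun n => MeasurableSpace.measurableSet_generateFrom
        (Cyl.cons (W n) _ _ (hWo n) (hWi n) (inter_subset_right.trans (hDW n)) (hB.inter (hD n))
          (Cyl.base univ .univ))
    | succ i ih =>
      intro B hB
      have : {x : BPath r s | ed x (i + 1) ∈ ((↑) '' B : Set (OnePoint E))} =
          ⋃ n, fst0 r s (D n) ∩ sh ⁻¹' {x | ed x i ∈ ((↑) '' B : Set (OnePoint E))} := by
        refine Set.ext fun x => ?_
        rw [mem_iUnion]
        constructor
        · intro hx
          have hx0 : ed x 0 ≠ ∞ := by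
            intro h0
            have : ∀ j, ed x j = ∞ := fun j => by
              induction j with
              | zero => exact h0
              | succ j ih => exact ed_succ_infty x j ih
            obtain ⟨e, -, he⟩ := hx
            exact OnePoint.coe_ne_infty e (he.trans (this _))
          obtain ⟨e, he⟩ := OnePoint.ne_infty_iff_exists.1 hx0
          obtain ⟨n, hn⟩ := mem_iUnion.1 (hcov.ge (mem_univ e))
          refine ⟨n, ⟨e, hn, he⟩, ?_⟩
          show ed (sh x) i ∈ ((↑) '' B : Set (OnePoint E))
          rw [ed_sh]; exact hx
        · rintro ⟨n, -, hx⟩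
          have hx : ed (sh x) i ∈ ((↑) '' B : Set (OnePoint E)) := hx
          rw [ed_sh] at hx
          exact hx
      rw [this]
      exact MeasurableSet.iUnion fun n => hsh _ (ih B hB) n
  have h1 : @Measurable _ _ m _ (brng r s) := fun B hB =>
    MeasurableSpace.measurableSet_generateFrom (Cyl.base B hB)
  have h2 : @Measurable _ _ m _ (ed : BPath r s → _) :=
    (@measurable_pi_iff _ _ _ m _ _).2 fun i =>
      @measurable_to_onePoint _ _ _ _ _ _ m _ fun U hU => hed i U hU.measurableSet
  exact h1.prodMk h2

/-- The Borel cylinders form a π-system on which quasi-invariant measures with the same range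
agree; the preimages of compact sets of vertices exhaust `∂E` by cylinders of finite measure. -/
theorem injOn_map_brng (hr : Continuous r) (hs : IsLocalHomeomorph s) {β : ℝ}
    {ν₁ ν₂ : Measure (BPath r s)} [ν₁.Regular] (h₁ : QuasiInv r s β ν₁) (h₂ : QuasiInv r s β ν₂)
    (h : Measure.map (brng r s) ν₁ = Measure.map (brng r s) ν₂) : ν₁ = ν₂ := by
  let K := CompactExhaustion.choice V
  refine Measure.ext_of_generateFrom_of_iUnion {A | Cyl r s A} (fun n => brng r s ⁻¹' K n)
    (borel_eq_generateFrom_cyl hr hs) (fun A hA B hB _ => Cyl.inter hr hA hB) ?_ (fun n => ?_)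
    (fun n => ?_) fun A hA => Cyl.measure_eq hr hs.continuous h₁ h₂ h hA
  · rw [← preimage_iUnion, K.iUnion_eq, preimage_univ]
  · exact Cyl.base _ (K.isCompact n).measurableSet
  · exact (isCompact_brng_preimage hr hs.continuous (K.isCompact n)).measure_lt_top.ne

end Injectivity

/-! ### Independent uniform variables and randomisation -/

section Randomisation
open unitInterval

/-- The law of a sequence of independent uniform variables on `[0,1]`. -/
noncomputable def unif : Measure (ℕ → I) := Measure.infinitePi fun _ => volume

instance instProbUnif : IsProbabilityMeasure unif := by unfold unif; infer_instance

/-- Prepending an independent uniform variable to a sequence of independent uniform variables. -/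
theorem map_cons_unif :
    Measure.map (fun p : I × (ℕ → I) => (fun n => Nat.casesOn n p.1 p.2 : ℕ → I))
      (volume.prod unif) = unif := by
  have hc : Measurable (fun p : I × (ℕ → I) => (fun n => Nat.casesOn n p.1 p.2 : ℕ → I)) := by
    refine measurable_pi_iff.2 fun n => ?_
    cases n with
    | zero => exact measurable_fst
    | succ n => exact (measurable_pi_apply n).comp measurable_snd
  refine Measure.eq_infinitePi _ fun s t ht => ?_
  classical
  -- The box is rewritten as a box over an initial segment of the indices.
  obtain ⟨N, hN⟩ : ∃ N, s ⊆ Finset.range (N + 1) :=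
    ⟨s.sup id, fun n hn => Finset.mem_range.2 (Nat.lt_succ_of_le (Finset.le_sup (f := id) hn))⟩
  let t' : ℕ → Set I := fun n => if n ∈ s then t n else univ
  have ht' : ∀ n, MeasurableSet (t' n) := fun n => by
    by_cases h : n ∈ s
    · simp only [t', h, if_true]; exact ht n
    · simp only [t', h, if_false]; exact .univ
  have hpre : (fun p : I × (ℕ → I) => (fun n => Nat.casesOn n p.1 p.2 : ℕ → I)) ⁻¹' Set.pi s t =
      t' 0 ×ˢ Set.pi (Finset.range N) fun n => t' (n + 1) := by
    ext p
    constructor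
    · intro h
      refine ⟨?_, fun n _ => ?_⟩
      · by_cases h0 : 0 ∈ s
        · simp only [t', h0, if_true]; exact h 0 h0
        · simp [t', h0]
      · by_cases h0 : n + 1 ∈ s
        · simp only [t', h0, if_true]; exact h (n + 1) h0
        · simp [t', h0]
    · rintro ⟨h1, h2⟩ n hn
      have hn : n ∈ s := hn
      cases n with
      | zero =>
        simp only [t', hn, if_true] at h1
        exact h1
      | succ n =>
        have := h2 n (by simpa using hN hn)
        simpa only [t', hn, if_true] using this
  have hprod : ∏ i ∈ s, (volume : Measure I) (t i) =
      ∏ i ∈ Finset.range (N + 1), (volume : Measure I) (t' i) := by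
    rw [← Finset.prod_subset hN (f := fun i => (volume : Measure I) (t' i))]
    · exact Finset.prod_congr rfl fun i hi => by simp [t', hi]
    · intro i _ hi
      simp [t', hi]
  rw [Measure.map_apply hc (MeasurableSet.pi s.countable_toSet fun i _ => ht i), hpre,
    Measure.prod_prod, unif, Measure.infinitePi_pi _ fun i _ => ht' (i + 1), hprod,
    Finset.prod_range_succ', mul_comm]

/-- The first term and the tail of a sequence of independent uniform variables are independent,
and the tail is again such a sequence. -/
theorem map_split_unif :
    Measure.map (fun u : ℕ → I => (u 0, fun n => u (n + 1))) unif = volume.prod unif := by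
  have hs : Measurable (fun u : ℕ → I => (u 0, fun n => u (n + 1))) := by fun_prop
  have hc : Measurable (fun p : I × (ℕ → I) => (fun n => Nat.casesOn n p.1 p.2 : ℕ → I)) := by
    refine measurable_pi_iff.2 fun n => ?_
    cases n with
    | zero => exact measurable_fst
    | succ n => exact (measurable_pi_apply n).comp measurable_snd
  conv_lhs => rw [← map_cons_unif]
  rw [Measure.map_map hs hc]
  exact Measure.map_id

/-- A measure on a product whose first marginal `μ` is σ-finite is the law of `(x, f (x, t))`, where
`x` is distributed according to `μ` and `t` is an independent uniform variable. -/
theorem exists_randomisation {X Y : Type*} [MeasurableSpace X] [MeasurableSpace Y]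
    [StandardBorelSpace Y] [Nonempty Y] (μ : Measure X) [SigmaFinite μ] (ρ : Measure (X × Y))
    (hρ : ρ.fst = μ) : ∃ f : X × I → Y, Measurable f ∧
      Measure.map (fun p : X × I => (p.1, f p)) (μ.prod volume) = ρ := by
  -- Disintegration is available for finite measures; `ρ` is made finite by a positive
  -- density that depends on the first coordinate only.
  obtain ⟨g, hg0, hgm, hg1⟩ := exists_pos_lintegral_lt_of_sigmaFinite μ (one_ne_zero)
  have hgm' : Measurable fun x => (g x : ENNReal) := hgm.coe_nnreal_ennreal
  let ρ' := ρ.withDensity fun p => (g p.1 : ENNReal)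
  have hmarg : ∀ φ : X → ENNReal, Measurable φ → ∫⁻ p, φ p.1 ∂ρ = ∫⁻ x, φ x ∂μ := fun φ hφ => by
    rw [← hρ, Measure.fst, lintegral_map hφ measurable_fst]
  have hfin : IsFiniteMeasure ρ' := ⟨by
    rw [withDensity_apply _ .univ, setLIntegral_univ, hmarg _ hgm']
    exact hg1.trans ENNReal.one_lt_top⟩
  have hfst : ρ'.fst = μ.withDensity fun x => (g x : ENNReal) := by
    ext B hB
    rw [Measure.fst_apply hB, withDensity_apply _ (measurable_fst hB), withDensity_apply _ hB,
      ← lintegral_indicator (measurable_fst hB), ← lintegral_indicator hB,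
      ← hmarg _ (hgm'.indicator hB)]
    rfl
  obtain ⟨f, hf, hfκ⟩ :=
    ProbabilityTheory.Kernel.exists_measurable_map_eq_unitInterval ρ'.condKernel
  refine ⟨Function.uncurry f, hf, ?_⟩
  have hm : Measurable fun p : X × I => (p.1, Function.uncurry f p) := measurable_fst.prodMk hf
  ext B hB
  let φ : X × Y → ENNReal := B.indicator fun p => (g p.1 : ENNReal)⁻¹
  have hφ : Measurable φ := (hgm'.comp measurable_fst).inv.indicator hB
  have hg0' : ∀ x, (g x : ENNReal) ≠ 0 := fun x => by simpa using (hg0 x).ne'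
  have e1 : ρ B = ∫⁻ p, φ p ∂ρ' := by
    rw [show ρ' = ρ.withDensity fun p => (g p.1 : ENNReal) from rfl,
      lintegral_withDensity_eq_lintegral_mul _ (by fun_prop) hφ, ← lintegral_indicator_one hB]
    refine lintegral_congr fun p => ?_
    by_cases hp : p ∈ B <;>
      simp [φ, hp, ENNReal.mul_inv_cancel (hg0' p.1) ENNReal.coe_ne_top]
  rw [e1, ← ρ'.disintegrate ρ'.condKernel, Measure.lintegral_compProd hφ, hfst,
    lintegral_withDensity_eq_lintegral_mul _ hgm' (by fun_prop), Measure.map_apply hm hB,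
    ← lintegral_indicator_one (hm hB),
    lintegral_prod _ ((measurable_one.indicator (hm hB)).aemeasurable)]
  refine lintegral_congr fun x => ?_
  rw [Pi.mul_apply, ← hfκ, lintegral_map (by fun_prop) (by fun_prop),
    ← lintegral_const_mul _ (by fun_prop)]
  refine lintegral_congr fun y => ?_
  by_cases hp : (x, f x y) ∈ B <;>
    simp [φ, hp, ENNReal.mul_inv_cancel (hg0' x) ENNReal.coe_ne_top]

end Randomisation

/-! ### The random path -/

section Chain
open unitInterval
variable [TopologicalSpace V] [TopologicalSpace E]

/-- The tail of a sequence. -/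
def tl (u : ℕ → I) : ℕ → I := fun n => u (n + 1)

theorem measurable_tl : Measurable tl := by unfold tl; fun_prop

/-- The `n`-th edge of the random path that starts at `p.1` and chooses its edges (or stops, by
choosing `∞`) by means of `f` and the random numbers `p.2`. -/
def pathE (s : E → V) (f : V × I → OnePoint E) : ℕ → V × (ℕ → I) → OnePoint E
  | 0, p => f (p.1, p.2 0)
  | n + 1, p => (f (p.1, p.2 0)).elim ∞ fun e => pathE s f n (s e, tl p.2)

/-- The random path, in the coordinates given by the range and the sequence of edges. -/
def pathW (s : E → V) (f : V × I → OnePoint E) (p : V × (ℕ → I)) : V × (ℕ → OnePoint E) :=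
  (p.1, fun n => pathE s f n p)

/-- A starting vertex `v` and a first step `o` which are allowed in a boundary path: an edge with
range `v`, or `∞` if `v` is singular. -/
def stepSet (r : E → V) : Set (V × OnePoint E) :=
  range (fun e => (r e, (e : OnePoint E))) ∪ {v | RegularVertex r v}ᶜ ×ˢ {∞}

/-- The `i`-th step of the random path is an allowed one, if there is such a step. -/
def stepOK (r s : E → V) (f : V × I → OnePoint E) : ℕ → V × (ℕ → I) → Prop
  | 0, p => (p.1, f (p.1, p.2 0)) ∈ stepSet r
  | n + 1, p => (f (p.1, p.2 0)).elim True fun e => stepOK r s f n (s e, tl p.2)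

theorem stepSet_coe {v : V} {e : E} (h : (v, (e : OnePoint E)) ∈ stepSet r) : r e = v := by
  rcases h with ⟨e', he'⟩ | ⟨-, h⟩
  · have h1 := (Prod.mk.inj he').1
    have h2 := OnePoint.coe_eq_coe.1 (Prod.mk.inj he').2
    rw [← h1, h2]
  · exact absurd h (OnePoint.coe_ne_infty e)

theorem stepSet_infty {v : V} (h : (v, (∞ : OnePoint E)) ∈ stepSet r) : ¬ RegularVertex r v := by
  rcases h with ⟨e', he'⟩ | ⟨h, -⟩
  · exact absurd (Prod.mk.inj he').2 (OnePoint.coe_ne_infty e')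
  · exact h

theorem pathE_zero (f : V × I → OnePoint E) (p : V × (ℕ → I)) :
    pathE s f 0 p = f (p.1, p.2 0) := rfl

theorem pathE_succ_coe {f : V × I → OnePoint E} {p : V × (ℕ → I)} {e : E}
    (h : f (p.1, p.2 0) = (e : OnePoint E)) (n : ℕ) :
    pathE s f (n + 1) p = pathE s f n (s e, tl p.2) := by
  simp only [pathE, h, OnePoint.elim_some]

theorem pathE_succ_infty {f : V × I → OnePoint E} {p : V × (ℕ → I)}
    (h : f (p.1, p.2 0) = ∞) (n : ℕ) : pathE s f (n + 1) p = ∞ := by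
  simp only [pathE, h, OnePoint.elim_infty]

theorem stepOK_succ {f : V × I → OnePoint E} {p : V × (ℕ → I)} {e : E}
    (h : f (p.1, p.2 0) = (e : OnePoint E)) {n : ℕ} (hn : stepOK r s f (n + 1) p) :
    stepOK r s f n (s e, tl p.2) := by
  simpa only [stepOK, h, OnePoint.elim_some] using hn

theorem pathE_coe_zero {f : V × I → OnePoint E} {p : V × (ℕ → I)} {n : ℕ} {e : E}
    (h : pathE s f (n + 1) p = (e : OnePoint E)) :
    ∃ e0 : E, f (p.1, p.2 0) = (e0 : OnePoint E) := by
  rcases h0 : f (p.1, p.2 0) with _ | e0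
  · exact absurd (h.symm.trans (pathE_succ_infty h0 n)) (OnePoint.coe_ne_infty e)
  · exact ⟨e0, rfl⟩

/-- If all its steps are allowed, then the random path is a boundary path. -/
theorem good_pathW {f : V × I → OnePoint E} {p : V × (ℕ → I)} (h : ∀ i, stepOK r s f i p) :
    Good r s (pathW s f p) where
  infty i := by
    show pathE s f i p = ∞ → pathE s f (i + 1) p = ∞
    clear h
    induction i generalizing p with
    | zero => exact fun h => pathE_succ_infty h 0
    | succ i ih =>
      intro h
      rcases h0 : f (p.1, p.2 0) with _ | e0
      · exact pathE_succ_infty h0 _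
      · rw [pathE_succ_coe h0] at h ⊢
        exact ih h
  rng e he := by
    have he : f (p.1, p.2 0) = (e : OnePoint E) := he
    have := h 0
    rw [stepOK, he] at this
    exact stepSet_coe this
  link i e e' := by
    show pathE s f i p = _ → pathE s f (i + 1) p = _ → _
    induction i generalizing p with
    | zero =>
      intro h1 h2
      rw [pathE_zero] at h1
      rw [pathE_succ_coe h1, pathE_zero] at h2
      have := stepOK_succ h1 (h 1)
      rw [stepOK, h2] at this
      exact (stepSet_coe this).symm
    | succ i ih =>
      intro h1 h2
      obtain ⟨e0, h0⟩ := pathE_coe_zero h1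
      rw [pathE_succ_coe h0] at h1 h2
      exact ih (fun j => stepOK_succ h0 (h (j + 1))) h1 h2
  sing_zero he := by
    have he : f (p.1, p.2 0) = ∞ := he
    have := h 0
    rw [stepOK, he] at this
    exact stepSet_infty this
  sing_succ i e := by
    show pathE s f i p = _ → pathE s f (i + 1) p = _ → _
    induction i generalizing p with
    | zero =>
      intro h1 h2
      rw [pathE_zero] at h1
      rw [pathE_succ_coe h1, pathE_zero] at h2
      have := stepOK_succ h1 (h 1)
      rw [stepOK, h2] at this
      exact stepSet_infty this
    | succ i ih =>
      intro h1 h2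
      obtain ⟨e0, h0⟩ := pathE_coe_zero h1
      rw [pathE_succ_coe h0] at h1 h2
      exact ih (fun j => stepOK_succ h0 (h (j + 1))) h1 h2

theorem isOpen_regularVertex : IsOpen {v : V | RegularVertex r v} := by
  refine isOpen_iff_mem_nhds.2 ?_
  rintro v ⟨U, hU, hv, h⟩
  exact mem_of_superset (hU.mem_nhds hv) fun w hw => ⟨U, hU, hw, h⟩

variable [MeasurableSpace V] [BorelSpace V] [MeasurableSpace E] [BorelSpace E]

theorem measurable_pathE (hs : Measurable s) {f : V × I → OnePoint E} (hf : Measurable f) (n : ℕ) :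
    Measurable (pathE s f n) := by
  have h0 : Measurable fun p : V × (ℕ → I) => f (p.1, p.2 0) := by fun_prop
  induction n with
  | zero => exact h0
  | succ n ih =>
    exact measurable_elim h0 measurable_const (ih.comp
      ((hs.comp measurable_snd).prodMk (measurable_tl.comp (measurable_snd.comp measurable_fst))))

theorem measurable_pathW (hs : Measurable s) {f : V × I → OnePoint E} (hf : Measurable f) :
    Measurable (pathW s f) :=
  measurable_fst.prodMk (measurable_pi_iff.2 (measurable_pathE hs hf))

variable [T2Space V] [T2Space E] [LocallyCompactSpace V] [LocallyCompactSpace E]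
  [SecondCountableTopology V] [SecondCountableTopology E]

theorem measurable_edgeStep (hr : Continuous r) :
    Measurable fun e : E => (r e, (e : OnePoint E)) :=
  hr.measurable.prodMk continuous_coe.measurable

theorem measurableSet_stepSet (hr : Continuous r) : MeasurableSet (stepSet r) := by
  have := polish_of_lcsc E
  have := polish_of_lcsc V
  have := polish_onePoint E
  refine MeasurableSet.union ?_ (isOpen_regularVertex.measurableSet.compl.prod
    (measurableSet_singleton _))
  exact ((measurable_edgeStep hr).measurableEmbedding fun e e' h =>
    OnePoint.coe_eq_coe.1 (Prod.mk.inj h).2).measurableSet_range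

theorem measurable_stepOK (hr : Continuous r) (hs : Continuous s) {f : V × I → OnePoint E}
    (hf : Measurable f) (n : ℕ) : Measurable (stepOK r s f n) := by
  have h0 : Measurable fun p : V × (ℕ → I) => f (p.1, p.2 0) := by fun_prop
  induction n with
  | zero =>
    exact measurableSet_setOfPred.1 ((measurable_fst.prodMk h0) (measurableSet_stepSet hr))
  | succ n ih =>
    exact measurable_elim h0 measurable_const (ih.comp
      ((hs.measurable.comp measurable_snd).prodMk
        (measurable_tl.comp (measurable_snd.comp measurable_fst))))

/-- The part of a sub-invariant measure `μ` that is not accounted for by `e^{-β} Tμ`: it is carried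
by the singular vertices. -/
theorem exists_singular_part {β : ℝ} {μ : Measure V} [μ.Regular] {sμ : Measure E}
    [sμ.Regular] (h1 : Measure.map r sμ ≤ ENNReal.ofReal (Real.exp β) • μ)
    (h2 : ∀ B : Set V, MeasurableSet B → (∀ v ∈ B, RegularVertex r v) →
      Measure.map r sμ B = ENNReal.ofReal (Real.exp β) * μ B) :
    ∃ κ : Measure V, SigmaFinite κ ∧
      ENNReal.ofReal (Real.exp (-β)) • Measure.map r sμ + κ = μ ∧
      κ {v | RegularVertex r v} = 0 := by
  let η := ENNReal.ofReal (Real.exp (-β)) • Measure.map r sμ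
  have hexp : ENNReal.ofReal (Real.exp (-β)) * ENNReal.ofReal (Real.exp β) = 1 := by
    rw [mul_comm, exp_mul_exp_neg]
  have hle : η ≤ μ := Measure.le_iff.2 fun B hB => by
    have := Measure.le_iff.1 h1 B hB
    rw [Measure.smul_apply, smul_eq_mul] at this ⊢
    calc _ ≤ ENNReal.ofReal (Real.exp (-β)) * (ENNReal.ofReal (Real.exp β) * μ B) := by gcongr
      _ = μ B := by rw [← mul_assoc, hexp, one_mul]
  have hσ : SigmaFinite η := Measure.sigmaFinite_of_le μ hle
  have hac : η ≪ μ := Measure.absolutelyContinuous_of_le hle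
  -- The difference `μ - η` is realised by the density `1 - dη/dμ`.
  let g := η.rnDeriv μ
  have hgm : Measurable g := Measure.measurable_rnDeriv _ _
  have hg1 : g ≤ᵐ[μ] 1 := Measure.rnDeriv_le_one_of_le hle
  let κ := μ.withDensity fun v => 1 - g v
  have hsle : κ ≤ μ := by
    conv_rhs => rw [← withDensity_one (μ := μ)]
    exact withDensity_mono (Eventually.of_forall fun v => tsub_le_self)
  have hadd : η + κ = μ := by
    rw [← Measure.withDensity_rnDeriv_eq η μ hac, ← withDensity_add_left hgm]
    conv_rhs => rw [← withDensity_one (μ := μ)]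
    refine withDensity_congr_ae ?_
    filter_upwards [hg1] with v hv
    exact add_tsub_cancel_of_le hv
  refine ⟨κ, Measure.sigmaFinite_of_le μ hsle, hadd, ?_⟩
  -- `η` and `μ` agree on regular vertices; the remainder vanishes there by cancellation on
  -- sets of finite measure.
  have hR : {v : V | RegularVertex r v} = ⋃ n, {v | RegularVertex r v} ∩ spanningSets μ n := by
    rw [← inter_iUnion, iUnion_spanningSets, inter_univ]
  rw [hR, measure_iUnion_null_iff]
  intro n
  set B := {v | RegularVertex r v} ∩ spanningSets μ n
  have hB : MeasurableSet B :=
    isOpen_regularVertex.measurableSet.inter (measurableSet_spanningSets μ n)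
  have hfin : μ B ≠ ⊤ :=
    ((measure_mono inter_subset_right).trans_lt (measure_spanningSets_lt_top μ n)).ne
  have hη : η B = μ B := by
    rw [Measure.smul_apply, h2 B hB fun v hv => hv.1, smul_eq_mul, ← mul_assoc, hexp, one_mul]
  have hsum : η B + κ B = μ B := by
    rw [← Measure.add_apply, hadd]
  rw [hη] at hsum
  exact (ENNReal.add_right_inj hfin).1 (by rw [hsum, add_zero])

end Chain

/-! ### Existence of quasi-invariant measures with a given range -/

section Surjectivity
open unitInterval
variable [TopologicalSpace V] [TopologicalSpace E]
  [T2Space V] [T2Space E] [LocallyCompactSpace V] [LocallyCompactSpace E]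
  [SecondCountableTopology V] [SecondCountableTopology E]
  [MeasurableSpace V] [BorelSpace V] [MeasurableSpace E] [BorelSpace E]

/-- The Markov property of the random path: conditionally on its first step, its continuation is a
random path of the same kind. -/
theorem measure_step (hr : Continuous r) {c : ENNReal} {μ κ : Measure V} {sμ : Measure E}
    [SigmaFinite μ] [SigmaFinite κ] [SigmaFinite sμ] {f : V × I → OnePoint E}
    (hf : Measurable f)
    (hρ : Measure.map (fun p : V × I => (p.1, f p)) (μ.prod volume) =
      c • Measure.map (fun e => (r e, (e : OnePoint E))) sμ +
        Measure.map (fun v => (v, (∞ : OnePoint E))) κ)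
    {A : Set ((V × OnePoint E) × (ℕ → I))} (hA : MeasurableSet A) :
    (μ.prod unif) {p | ((p.1, f (p.1, p.2 0)), tl p.2) ∈ A} =
      c * (sμ.prod unif) {q | ((r q.1, (q.1 : OnePoint E)), q.2) ∈ A} +
        (κ.prod unif) {q | ((q.1, (∞ : OnePoint E)), q.2) ∈ A} := by
  have hsplit : Measurable (fun u : ℕ → I => (u 0, fun n => u (n + 1))) := by fun_prop
  have hF : Measurable fun p : V × I => (p.1, f p) := measurable_fst.prodMk hf
  have he := measurable_edgeStep hr
  have hi : Measurable fun v : V => (v, (∞ : OnePoint E)) := by fun_prop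
  have h1 : (μ.prod volume).prod unif = Measure.map
      (MeasurableEquiv.prodAssoc.symm ∘ Prod.map id fun u : ℕ → I => (u 0, fun n => u (n + 1)))
      (μ.prod unif) := by
    rw [← Measure.map_map MeasurableEquiv.prodAssoc.symm.measurable (measurable_id.prodMap hsplit),
      ← Measure.map_prod_map _ _ measurable_id hsplit, map_split_unif, Measure.map_id,
      ← Measure.prodAssoc_prod, MeasurableEquiv.map_symm_map]
  have h2 : Measure.map (fun p : V × (ℕ → I) => ((p.1, f (p.1, p.2 0)), tl p.2)) (μ.prod unif) =
      (c • Measure.map (fun e => (r e, (e : OnePoint E))) sμ +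
        Measure.map (fun v => (v, (∞ : OnePoint E))) κ).prod unif := by
    rw [← hρ]
    conv_rhs => rw [← Measure.map_id (μ := unif)]
    rw [Measure.map_prod_map _ _ hF measurable_id, h1, Measure.map_map (hF.prodMap measurable_id)
      (MeasurableEquiv.prodAssoc.symm.measurable.comp (measurable_id.prodMap hsplit))]
    rfl
  have h3 : ∀ {Z : Type u} [MeasurableSpace Z] (τ : Measure Z) [SigmaFinite τ]
      (g : Z → V × OnePoint E), Measurable g → ((Measure.map g τ).prod unif) A =
        (τ.prod unif) {q | (g q.1, q.2) ∈ A} := by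
    intro Z _ τ _ g hg
    conv_lhs => rw [← Measure.map_id (μ := unif)]
    rw [Measure.map_prod_map _ _ hg measurable_id,
      Measure.map_apply (hg.prodMap measurable_id) hA]
    rfl
  have hm : Measurable fun p : V × (ℕ → I) => ((p.1, f (p.1, p.2 0)), tl p.2) :=
    (measurable_fst.prodMk (by fun_prop)).prodMk (measurable_tl.comp measurable_snd)
  have h4 := congrArg (fun τ => τ A) h2
  rw [Measure.map_apply hm hA, Measure.add_prod, Measure.prod_smul_left, Measure.add_apply,
    Measure.smul_apply, smul_eq_mul, h3 _ _ he, h3 _ _ hi] at h4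
  exact h4

/-- The pullback property is inherited by the products with a further measure. -/
theorem prod_pullback (hs : Continuous s) {μ : Measure V} {sμ : Measure E} [SigmaFinite μ]
    [SigmaFinite sμ] (h : IsPullback s sμ μ) {W D : Set E} (hW : IsOpen W) (hWs : InjOn s W)
    (hD : MeasurableSet D) (hDW : D ⊆ W) {N : Set (V × (ℕ → I))} (hN : MeasurableSet N) :
    (sμ.prod unif) {q | q.1 ∈ D ∧ (s q.1, q.2) ∈ N} =
      (μ.prod unif) {p | p.1 ∈ s '' D ∧ p ∈ N} := by
  have hsD := measurableSet_s_image hs hWs hD hDW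
  have h1 : Measure.map s (sμ.restrict D) = μ.restrict (s '' D) := by
    ext B hB
    have e : s '' (s ⁻¹' B ∩ D) = B ∩ s '' D := by rw [image_preimage_inter]
    rw [Measure.map_apply hs.measurable hB, Measure.restrict_apply (hs.measurable hB),
      Measure.restrict_apply hB, ← e]
    exact h W hW hWs _ (inter_subset_right.trans hDW) ((hs.measurable hB).inter hD)
  have h2 : ((μ.restrict (s '' D)).prod unif) N = (μ.prod unif) {p | p.1 ∈ s '' D ∧ p ∈ N} := by
    conv_lhs => rw [← Measure.restrict_univ (μ := unif)]
    rw [Measure.prod_restrict, Measure.restrict_apply hN]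
    congr 1
    exact Set.ext fun p => by simp [and_comm]
  rw [← h2, ← h1]
  conv_rhs => rw [← Measure.map_id (μ := unif)]
  rw [Measure.map_prod_map _ _ hs.measurable measurable_id,
    Measure.map_apply (hs.measurable.prodMap measurable_id) hN]
  conv_rhs => rw [← Measure.restrict_univ (μ := unif)]
  rw [Measure.prod_restrict,
    Measure.restrict_apply ((hs.measurable.prodMap measurable_id) hN)]
  congr 1
  exact Set.ext fun p => ⟨fun h => ⟨h.2, h.1, mem_univ _⟩, fun h => ⟨h.2.1, h.1⟩⟩

/-- Almost sure properties of random paths starting at `μ` hold almost surely for random paths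
starting at the source of an edge distributed according to the pullback of `μ`. -/
theorem ae_pullback (hs : IsLocalHomeomorph s) {μ : Measure V} {sμ : Measure E} [SigmaFinite μ]
    [SigmaFinite sμ] (h : IsPullback s sμ μ) {P : V × (ℕ → I) → Prop} (hP : Measurable P)
    (hae : ∀ᵐ p ∂μ.prod unif, P p) : ∀ᵐ q ∂sμ.prod unif, P (s q.1, q.2) := by
  obtain ⟨D, W, hD, hDW, -, hcov, hW, hWs⟩ := exists_cover hs
  have hN : MeasurableSet {p | ¬ P p} := (measurableSet_setOfPred.2 hP).compl
  have e : {q : E × (ℕ → I) | ¬ P (s q.1, q.2)} =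
      ⋃ n, {q | q.1 ∈ D n ∧ (s q.1, q.2) ∈ {p | ¬ P p}} := Set.ext fun q => by
    have : q.1 ∈ ⋃ n, D n := hcov ▸ mem_univ _
    obtain ⟨n, hn⟩ := mem_iUnion.1 this
    refine ⟨fun hq => mem_iUnion.2 ⟨n, hn, hq⟩, fun hq => ?_⟩
    obtain ⟨m, hm⟩ := mem_iUnion.1 hq
    exact hm.2
  rw [ae_iff, e, measure_iUnion_null_iff]
  intro n
  rw [prod_pullback hs.continuous h (hW n) (hWs n) (hD n) (hDW n) hN]
  exact measure_mono_null (fun p hp => hp.2) (ae_iff.1 hae)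

/-- The first step is an allowed one since `κ` is carried by the singular vertices; the later
ones are first steps of the continued path, whose starting point is the source of an edge
distributed according to `sμ`. -/
theorem ae_stepOK (hr : Continuous r) (hs : IsLocalHomeomorph s) {c : ENNReal}
    {μ κ : Measure V} {sμ : Measure E}
    [SigmaFinite μ] [SigmaFinite κ] [SigmaFinite sμ] {f : V × I → OnePoint E}
    (hf : Measurable f) (h : IsPullback s sμ μ) (hsing : κ {v | RegularVertex r v} = 0)
    (hρ : Measure.map (fun p : V × I => (p.1, f p)) (μ.prod volume) =
      c • Measure.map (fun e => (r e, (e : OnePoint E))) sμ +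
        Measure.map (fun v => (v, (∞ : OnePoint E))) κ) (i : ℕ) :
    ∀ᵐ p ∂μ.prod unif, stepOK r s f i p := by
  have hm := measurable_stepOK hr hs.continuous hf i
  induction i with
  | zero =>
    have hA : MeasurableSet ((stepSet r)ᶜ ×ˢ (univ : Set (ℕ → I))) :=
      (measurableSet_stepSet hr).compl.prod .univ
    have := measure_step hr hf hρ hA
    have e1 : {q : E × (ℕ → I) | ((r q.1, (q.1 : OnePoint E)), q.2) ∈
        (stepSet r)ᶜ ×ˢ (univ : Set (ℕ → I))} = ∅ :=
      eq_empty_of_forall_notMem fun q hq => hq.1 (Or.inl ⟨q.1, rfl⟩)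
    have e2 : {q : V × (ℕ → I) | ((q.1, (∞ : OnePoint E)), q.2) ∈
        (stepSet r)ᶜ ×ˢ (univ : Set (ℕ → I))} ⊆ {v | RegularVertex r v} ×ˢ univ := fun q hq => by
      by_contra hn
      exact hq.1 (Or.inr ⟨fun hq => hn ⟨hq, mem_univ _⟩, rfl⟩)
    have e3 : (κ.prod unif) ({v | RegularVertex r v} ×ˢ univ) = 0 := by
      rw [Measure.prod_prod, hsing, zero_mul]
    rw [e1, measure_empty, mul_zero, measure_mono_null e2 e3, add_zero] at this
    refine ae_iff.2 (measure_mono_null ?_ this)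
    exact fun p hp => ⟨hp, mem_univ _⟩
  | succ i ih =>
    have hi := measurable_stepOK hr hs.continuous hf i
    let P : (V × OnePoint E) × (ℕ → I) → Prop :=
      fun z => z.1.2.elim True fun e => stepOK r s f i (s e, z.2)
    have hP : Measurable P := measurable_elim (by fun_prop) measurable_const
      (hi.comp ((hs.continuous.measurable.comp measurable_snd).prodMk
        (measurable_snd.comp measurable_fst)))
    have := measure_step hr hf hρ (A := {z | ¬ P z}) (measurableSet_setOfPred.2 hP).compl
    have e1 : (sμ.prod unif) {q : E × (ℕ → I) | ((r q.1, (q.1 : OnePoint E)), q.2) ∈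
        {z | ¬ P z}} = 0 := ae_iff.1 (ae_pullback hs h hi (ih hi))
    have e2 : {q : V × (ℕ → I) | ((q.1, (∞ : OnePoint E)), q.2) ∈ {z | ¬ P z}} = ∅ :=
      eq_empty_of_forall_notMem fun q hq => hq trivial
    rw [e1, e2, mul_zero, measure_empty, add_zero] at this
    exact ae_iff.2 this

/-- Every sub-invariant measure is the law of the range of a boundary path which is distributed
according to a quasi-invariant measure. -/
theorem surjOn_map_brng (hr : Continuous r) (hs : IsLocalHomeomorph s) {β : ℝ} {μ : Measure V}
    (h : SubInv r s β μ) : ∃ ν : Measure (BPath r s), ν.Regular ∧ QuasiInv r s β ν ∧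
      Measure.map (brng r s) ν = μ := by
  obtain ⟨hμ, sμ, hsμ, hpb, h1, h2⟩ := h
  obtain ⟨κ, hσ, hadd, hsing⟩ := exists_singular_part h1 h2
  have := polish_onePoint E
  have hsc := hs.continuous
  set c := ENNReal.ofReal (Real.exp (-β)) with hc
  have he := measurable_edgeStep hr
  have hi : Measurable fun v : V => (v, (∞ : OnePoint E)) := by fun_prop
  -- The joint law of a vertex, distributed according to `μ`, and the first step of the
  -- random path.
  obtain ⟨f, hf, hρ⟩ := exists_randomisation μ
    (c • Measure.map (fun e => (r e, (e : OnePoint E))) sμ +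
        Measure.map (fun v => (v, (∞ : OnePoint E))) κ) (by
      rw [Measure.fst, Measure.map_add _ _ measurable_fst, Measure.map_smul,
        Measure.map_map measurable_fst he, Measure.map_map measurable_fst hi, ← hadd]
      congr 1
      exact Measure.map_id)
  have hgood : ∀ᵐ p ∂μ.prod unif, pathW s f p ∈ range (Phi : BPath r s → _) := by
    filter_upwards [ae_all_iff.2 (ae_stepOK hr hs hf hpb hsing hρ)] with p hp
    rw [range_Phi]
    exact good_pathW hp
  have hPhi := measurableEmbedding_Phi hr hsc
  have hpW := measurable_pathW hsc.measurable hf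
  let M : Measure (V × (ℕ → OnePoint E)) := Measure.map (pathW s f) (μ.prod unif)
  let ν : Measure (BPath r s) := M.comap Phi
  have hνB : ∀ B : Set (BPath r s), MeasurableSet B →
      ν B = (μ.prod unif) {p | pathW s f p ∈ Phi '' B} := fun B hB => by
    rw [hPhi.comap_apply, Measure.map_apply hpW (hPhi.measurableSet_image.2 hB)]
    rfl
  have hmap : Measure.map (brng r s) ν = μ := by
    have e1 : Measure.map Phi ν = M := by
      rw [hPhi.map_comap]
      refine Measure.restrict_eq_self_of_ae_mem ?_
      exact (ae_map_iff hpW.aemeasurable hPhi.measurableSet_range).2 hgood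
    have e2 : (brng r s) = Prod.fst ∘ (Phi : BPath r s → _) := rfl
    rw [e2, ← Measure.map_map measurable_fst measurable_Phi, e1,
      Measure.map_map measurable_fst hpW]
    have e3 : (Prod.fst ∘ pathW s f : V × (ℕ → I) → V) = Prod.fst := rfl
    rw [e3]
    exact Measure.fst_prod
  have := t2_BPath hr hsc
  have := sc_BPath hr hsc
  have := lc_BPath hr hsc
  refine ⟨ν, regular_of_locallyFinite ν ⟨fun x => ?_⟩, quasiInv_of hr hs ?_, hmap⟩
  · obtain ⟨U, hU, hfin⟩ := μ.finiteAt_nhds (brng r s x)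
    obtain ⟨U', hU'U, hU', hx⟩ := mem_nhds_iff.1 hU
    refine ⟨brng r s ⁻¹' U', (hU'.preimage continuous_brng).mem_nhds hx, ?_⟩
    rw [← Measure.map_apply measurable_brng hU'.measurableSet, hmap]
    exact (measure_mono hU'U).trans_lt hfin
  intro W hW hWs B hB hBm
  have hshB := measurableSet_sh_image hr hsc hWs hBm hB
  -- A boundary path is in `B` if its first edge `e` and its shift satisfy the condition `Q e`.
  let Q : E → (V × OnePoint E) × (ℕ → I) → Prop := fun e z => e ∈ W ∧
    (z.1.1, (fun n => Nat.casesOn n (e : OnePoint E) fun n => pathE s f n (s e, z.2) :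
      ℕ → OnePoint E)) ∈ Phi '' B
  have hQ : Measurable fun p : ((V × OnePoint E) × (ℕ → I)) × E => Q p.2 p.1 := by
    refine Measurable.and (measurableSet_setOfPred.1 (hW.measurableSet.preimage measurable_snd))
      (measurableSet_setOfPred.1 ?_)
    refine (hPhi.measurableSet_image.2 hBm).preimage
      (((measurable_fst.comp measurable_fst).comp measurable_fst).prodMk
        (measurable_pi_iff.2 fun n => ?_))
    cases n with
    | zero => exact continuous_coe.measurable.comp measurable_snd
    | succ n =>
      exact (measurable_pathE hsc.measurable hf n).comp
        ((hsc.measurable.comp measurable_snd).prodMk (measurable_snd.comp measurable_fst))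
  let A : Set ((V × OnePoint E) × (ℕ → I)) := {z | z.1.2.elim False fun e => Q e z}
  have hA : MeasurableSet A :=
    measurableSet_setOfPred.2 (measurable_elim (by fun_prop) measurable_const hQ)
  -- The event that the random path lies in `B` is a condition on its first step and the
  -- remaining random numbers.
  have e1 : {p | pathW s f p ∈ Phi '' B} =
      {p : V × (ℕ → I) | ((p.1, f (p.1, p.2 0)), tl p.2) ∈ A} := Set.ext fun p => by
    show _ ↔ (f (p.1, p.2 0)).elim False fun e => Q e ((p.1, f (p.1, p.2 0)), tl p.2)
    rcases h0 : f (p.1, p.2 0) with _ | e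
    · refine ⟨?_, fun h => h.elim⟩
      rintro ⟨x, hx, hxp⟩
      obtain ⟨e, -, hxe⟩ := hB hx
      have : ed x 0 = f (p.1, p.2 0) := congrFun (congrArg Prod.snd hxp) 0
      rw [h0, ← hxe] at this
      exact (OnePoint.coe_ne_infty e this).elim
    · have hp : pathW s f p = (p.1, (fun n => Nat.casesOn n (e : OnePoint E) fun n =>
          pathE s f n (s e, tl p.2) : ℕ → OnePoint E)) := by
        refine Prod.ext rfl (funext fun n => ?_)
        cases n with
        | zero => exact h0
        | succ n => exact pathE_succ_coe h0 n
      show _ ↔ e ∈ W ∧ _ ∈ Phi '' B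
      rw [mem_ofPred_eq, hp]
      refine ⟨fun hq => ⟨?_, hq⟩, fun hq => hq.2⟩
      obtain ⟨x, hx, hxp⟩ := hq
      obtain ⟨e', he', hxe⟩ := hB hx
      have : ed x 0 = (e : OnePoint E) := congrFun (congrArg Prod.snd hxp) 0
      rw [← hxe] at this
      rwa [← OnePoint.coe_eq_coe.1 this]
  -- For a fixed first edge `e`, this condition says that the random path which starts at
  -- `s e` lies in the image of `B` under the shift.
  have e2 : {q : E × (ℕ → I) | ((r q.1, (q.1 : OnePoint E)), q.2) ∈ A} =
      {q | q.1 ∈ W ∧ (s q.1, q.2) ∈ {p | pathW s f p ∈ Phi '' (sh '' B)}} := Set.ext fun q => by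
    show (q.1 ∈ W ∧ _ ∈ Phi '' B) ↔ (q.1 ∈ W ∧ _)
    refine and_congr_right fun hqW => ⟨?_, ?_⟩
    · rintro ⟨x, hx, hxq⟩
      have h0 : ed x 0 = (q.1 : OnePoint E) := congrFun (congrArg Prod.snd hxq) 0
      refine ⟨sh x, ⟨x, hx, rfl⟩, Prod.ext (brng_sh_coe x _ h0) (funext fun n => ?_)⟩
      exact (ed_sh x n).trans (congrFun (congrArg Prod.snd hxq) (n + 1))
    · rintro ⟨_, ⟨x, hx, rfl⟩, hxq⟩
      obtain ⟨e', he', hxe⟩ := hB hx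
      have hb : brng r s (sh x) = s q.1 := congrArg Prod.fst hxq
      rw [brng_sh_coe x e' hxe.symm] at hb
      have := hWs he' hqW hb
      subst this
      refine ⟨x, hx, Prod.ext (ed_zero_r x _ hxe.symm).symm (funext fun n => ?_)⟩
      cases n with
      | zero => exact hxe.symm
      | succ n => exact (ed_sh x n).symm.trans (congrFun (congrArg Prod.snd hxq) n)
  -- Paths in `B` have positive length, so stopping at once does not contribute.
  have e3 : {q : V × (ℕ → I) | ((q.1, (∞ : OnePoint E)), q.2) ∈ A} = ∅ :=
    eq_empty_of_forall_notMem fun q hq => hq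
  have e4 : {p : V × (ℕ → I) | p.1 ∈ s '' W ∧ p ∈ {p | pathW s f p ∈ Phi '' (sh '' B)}} =
      {p | pathW s f p ∈ Phi '' (sh '' B)} := Set.ext fun p => by
    refine ⟨fun hp => hp.2, fun hp => ⟨?_, hp⟩⟩
    obtain ⟨_, ⟨x, hx, rfl⟩, hxp⟩ := hp
    obtain ⟨e', he', hxe⟩ := hB hx
    exact ⟨e', he', (brng_sh_coe x e' hxe.symm).symm.trans (congrArg Prod.fst hxp)⟩
  rw [hνB _ hBm, hνB _ hshB, e1, measure_step hr hf hρ hA, e2, e3, measure_empty, add_zero,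
    prod_pullback hsc hpb hW hWs hW.measurableSet subset_rfl
      (N := {p | pathW s f p ∈ Phi '' (sh '' B)})
      ((hPhi.measurableSet_image.2 hshB).preimage hpW), e4]

end Surjectivity

end

open scoped ENNReal in
/-- the pushforward along the range map `r : ∂E → E⁰` is an affine bijection
between the `β`-quasi-invariant regular Borel measures on `∂E` and the `β`-sub-invariant
regular Borel measures on `E⁰`; moreover `ν` is a probability measure iff `r_*ν` is. -/
theorem stmt17 {V E : Type u} (r s : E → V) [TopologicalSpace V] [TopologicalSpace E]
    [T2Space V] [T2Space E] [LocallyCompactSpace V] [LocallyCompactSpace E]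
    [SecondCountableTopology V] [SecondCountableTopology E]
    [MeasurableSpace V] [BorelSpace V] [MeasurableSpace E] [BorelSpace E]
    (hr : Continuous r) (hs : IsLocalHomeomorph s) (β : ℝ) :
    Set.BijOn (fun ν : Measure (BPath r s) => Measure.map (brng r s) ν)
      {ν | ν.Regular ∧ QuasiInv r s β ν} {μ | SubInv r s β μ} ∧
    (∀ ν₁ ν₂ : Measure (BPath r s), ∀ a b : ℝ≥0∞, a + b = 1 →
      Measure.map (brng r s) (a • ν₁ + b • ν₂) =
        a • Measure.map (brng r s) ν₁ + b • Measure.map (brng r s) ν₂) ∧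
    (∀ ν : Measure (BPath r s), ν.Regular → QuasiInv r s β ν →
      (IsProbabilityMeasure ν ↔ IsProbabilityMeasure (Measure.map (brng r s) ν))) := by
  refine ⟨⟨fun ν hν => subInv_map hr hs hν.1 hν.2, ?_, ?_⟩, ?_, ?_⟩
  · intro ν₁ h₁ ν₂ h₂ h
    have := h₁.1
    exact injOn_map_brng hr hs h₁.2 h₂.2 h
  · intro μ hμ
    obtain ⟨ν, hν, hq, h⟩ := surjOn_map_brng hr hs hμ
    exact ⟨ν, ⟨hν, hq⟩, h⟩
  · intro ν₁ ν₂ a b _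
    rw [Measure.map_add _ _ measurable_brng, Measure.map_smul, Measure.map_smul]
  · intro ν _ _
    rw [isProbabilityMeasure_iff, isProbabilityMeasure_iff,
      Measure.map_apply measurable_brng .univ, preimage_univ]

end TopGraph
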